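/- Fix integers ℓ > r ≥ 2 and a 2-graph F with χ(F) = ℓ. For every ε > 0 there exist n₀ = n₀(r, ℓ, ε) > 0 and η = η(r, ℓ, ε) > 0 such that: if n > n₀ and G is an n-vertex H_F^(r)-free r-graph with |E(G)| ≥ t_r(n, ℓ−1) − η·C(n, r), then G is ε-close to T_r(n, ℓ−1). -/

import Mathlib

open Finset

/-- An `r`-graph: a set of edges each of which has exactly `r` vertices. -/
def IsRGraph {α : Type*} (r : ℕ) (G : Finset (Finset α)) : Prop :=
  ∀ e ∈ G, e.card = r

/-- `G` contains a (not necessarily induced) copy of `H`, i.e. a subgraph isomorphic to `H`. -/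
def ContainsCopy {α β : Type*} [DecidableEq β]
    (H : Finset (Finset α)) (G : Finset (Finset β)) : Prop :=
  ∃ f : α → β, Function.Injective f ∧ ∀ e ∈ H, e.image f ∈ G

/-- There is a homomorphism from `H` to `G`. -/
def ContainsHom {α β : Type*} [DecidableEq β]
    (H : Finset (Finset α)) (G : Finset (Finset β)) : Prop :=
  ∃ f : α → β, ∀ e ∈ H, e.image f ∈ G

/-- The Turán number `ex(n, H)` for `r`-graphs: the maximum number of edges in an
`n`-vertex `H`-free `r`-graph. -/
noncomputable def exNum {α : Type*} (r n : ℕ) (H : Finset (Finset α)) : ℕ :=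
  sSup {m | ∃ G : Finset (Finset (Fin n)), IsRGraph r G ∧ ¬ ContainsCopy H G ∧ G.card = m}

/-- The two endpoints of an edge of a simple graph, as a `Finset`. -/
def sym2ToFinset {α : Type*} [Fintype α] [DecidableEq α] (e : Sym2 α) : Finset α :=
  Finset.univ.filter (· ∈ e)

/-- The expansion `H_F^(r)` of a 2-graph `F`: each edge of `F` is enlarged with a new set of
`r - 2` vertices, distinct edges getting disjoint sets of new vertices. -/
def expansion {α : Type*} [Fintype α] [DecidableEq α] (r : ℕ)
    (F : SimpleGraph α) [DecidableRel F.Adj] :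
    Finset (Finset (α ⊕ (F.edgeFinset × Fin (r - 2)))) :=
  F.edgeFinset.attach.image (fun e =>
    (sym2ToFinset e.1).image Sum.inl ∪
      (Finset.univ : Finset (Fin (r - 2))).image (fun i => Sum.inr (e, i)))

/-- The complete balanced `l`-partite `r`-graph `T_r(n, l)` on vertex set `Fin n`,
with vertex classes the residue classes modulo `l` (which differ in size by at most 1):
its edges are all `r`-sets meeting each class in at most one vertex. -/
def turanGraph (r n l : ℕ) : Finset (Finset (Fin n)) :=
  (Finset.univ.powersetCard r).filter
    (fun e => ∀ u ∈ e, ∀ v ∈ e, (u : ℕ) % l = (v : ℕ) % l → u = v)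

/-- `t_r(n, l)`, the number of edges of `T_r(n, l)`. -/
def turanNum (r n l : ℕ) : ℕ := (turanGraph r n l).card

/-- Two `r`-graphs on `Fin n` are `ε`-close if some relabelling of the first one has
symmetric difference at most `ε·C(n,r)` with the second one. -/
def EpsClose (r n : ℕ) (ε : ℝ) (G₁ G₂ : Finset (Finset (Fin n))) : Prop :=
  ∃ σ : Fin n ≃ Fin n,
    ((((G₁.image fun e => e.image σ) \ G₂) ∪ (G₂ \ (G₁.image fun e => e.image σ))).card : ℝ)
      ≤ ε * (n.choose r)

/-- `G` contains a member of the decomposition family `𝓕_F` (w.r.t. proper `ℓ`-colourings of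
`F`) as a subgraph, with all its vertices placed inside `S`.  A member of `𝓕_F` is obtained
from `F` by deleting the vertices of `ℓ - 2` colour classes of a proper `ℓ`-colouring of `F`. -/
def ContainsDecompMemberOn {α β : Type*} [DecidableEq β] (ℓ : ℕ) (F : SimpleGraph α)
    (G : Finset (Finset β)) (S : Set β) : Prop :=
  ∃ c : α → Fin ℓ, (∀ ⦃u v⦄, F.Adj u v → c u ≠ c v) ∧
    ∃ i j : Fin ℓ, i ≠ j ∧
      ∃ f : {v : α // c v = i ∨ c v = j} → β, Function.Injective f ∧
        (∀ v, f v ∈ S) ∧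
        ∀ u v : {v : α // c v = i ∨ c v = j}, F.Adj u.1 v.1 → ({f u, f v} : Finset β) ∈ G

/-- `biex(n, F) = ex(n, 𝓕_F)`: the maximum number of edges in an `n`-vertex 2-graph containing
no member of the decomposition family of `F` (w.r.t. proper `ℓ`-colourings) as a subgraph. -/
noncomputable def biex {α : Type*} (ℓ : ℕ) (F : SimpleGraph α) (n : ℕ) : ℕ :=
  sSup {m | ∃ G : Finset (Finset (Fin n)), IsRGraph 2 G ∧
    ¬ ContainsDecompMemberOn ℓ F G Set.univ ∧ G.card = m}

/-- The Lagrangian of an `r`-graph `G`: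
`λ(G) = max { Σ_{e ∈ G} Π_{i ∈ e} w i }` over all legal weightings `w`. -/
noncomputable def lagrangian {α : Type*} [Fintype α] (G : Finset (Finset α)) : ℝ :=
  sSup {x : ℝ | ∃ w : α → ℝ, (∀ i, 0 ≤ w i) ∧ (∑ i, w i) = 1 ∧
    x = ∑ e ∈ G, ∏ i ∈ e, w i}

/-!
Put `k = ℓ - 1` and call a pair of vertices heavy if its degree in `G` is at least `γ n ^ (r - 2)`.
A copy of `F` in the graph `P` of heavy pairs extends greedily to a copy of `H_F^(r)` in `G`; since
`F` is `(k + 1)`-colourable, Erdős's theorem on complete partite sub-hypergraphs then shows that `P`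
has `o(n ^ (k + 1))` cliques of order `k + 1`. On the other hand all but few edges of `G` are
cliques of `P`, so `P` has asymptotically as many `r`-cliques as the Turán graph.

The clique densities of `P` satisfy the Moon–Moser inequalities, whose only solution with these
values at `k + 1` and `r` is that of the complete balanced `k`-partite graph. By compactness all
clique densities of `P` are close to the latter. Colour each vertex by an entry of a `k`-clique such
that it is adjacent to all the other entries: averaging over the `k`-cliques gives a colouring of
`P` with few monochromatic edges, which the edge density of `P` forces to be balanced. Hence, up to
relabelling the vertices, almost all edges of `G` lie in the Turán graph, and counting edges bounds
the number of those that are missing.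
-/

/-- The limiting ordered `s`-clique density of the balanced complete `k`-partite graph. -/
noncomputable def turanCliqueDensity (k s : ℕ) : ℝ := k.descFactorial s / (k : ℝ) ^ s

/-- Sequences satisfying the Moon–Moser inequalities, normalised like clique densities. -/
structure IsMoonMoserSeq (h : ℕ → ℝ) : Prop where
  zero : h 0 = 1
  mem_Icc : ∀ s, h s ∈ Set.Icc (0 : ℝ) 1
  succ_mul_sq_le : ∀ s : ℕ, (s + 1) * h (s + 1) ^ 2 ≤ h s * (h (s + 1) + s * h (s + 2))

section MoonMoser

variable {k : ℕ}

lemma turanCliqueDensity_zero : turanCliqueDensity k 0 = 1 := by simp [turanCliqueDensity]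

lemma turanCliqueDensity_self_succ : turanCliqueDensity k (k + 1) = 0 := by
  simp [turanCliqueDensity]

lemma turanCliqueDensity_pos {s : ℕ} (hsk : s ≤ k) : 0 < turanCliqueDensity k s := by
  have := Nat.descFactorial_pos.2 hsk
  have := Nat.descFactorial_le_pow k s
  rw [turanCliqueDensity, ← Nat.cast_pow]
  exact div_pos (by exact_mod_cast ‹_›) (by exact_mod_cast (by lia))

lemma turanCliqueDensity_succ (hk : 0 < k) (s : ℕ) :
    turanCliqueDensity k (s + 1) = turanCliqueDensity k s * (1 - s / k) := by
  rcases le_or_gt s k with hsk | hks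
  · rw [turanCliqueDensity, turanCliqueDensity, Nat.descFactorial_succ, Nat.cast_mul,
      Nat.cast_sub hsk]
    field_simp
    ring
  · simp [turanCliqueDensity, Nat.descFactorial_of_lt hks]

lemma one_sub_div_nonneg {s : ℕ} (hsk : s ≤ k) : 0 ≤ 1 - (s / k : ℝ) :=
  sub_nonneg.2 (div_le_one_of_le₀ (mod_cast hsk) k.cast_nonneg)

lemma succ_mul_turanCliqueDensity_succ_sq (hk : 0 < k) (s : ℕ) :
    (s + 1) * turanCliqueDensity k (s + 1) ^ 2 = turanCliqueDensity k s *
      (turanCliqueDensity k (s + 1) + s * turanCliqueDensity k (s + 2)) := by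
  rw [turanCliqueDensity_succ hk (s + 1), turanCliqueDensity_succ hk s]
  push_cast
  field_simp
  ring

namespace IsMoonMoserSeq

variable {h : ℕ → ℝ}

lemma nonneg (hh : IsMoonMoserSeq h) (s : ℕ) : 0 ≤ h s := (hh.mem_Icc s).1

lemma succ_le_mul_one_sub_div (hh : IsMoonMoserSeq h) (hk : 0 < k) (hzero : h (k + 1) ≤ 0) {s : ℕ}
    (hsk : s ≤ k) : h (s + 1) ≤ h s * (1 - s / k) := by
  induction hsk using Nat.decreasingInduction with
  | self => simpa [hk.ne'] using hzero
  | of_succ s hsk ih =>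
    rcases (hh.nonneg (s + 1)).eq_or_lt with hs | hs
    · rw [← hs]
      exact mul_nonneg (hh.nonneg s) (one_sub_div_nonneg hsk.le)
    · push_cast at ih
      have moonMoser : (s + 1) * h (s + 1) ^ 2 ≤ (s + 1) * h (s + 1) * (h s * (1 - s / k)) :=
        calc (s + 1) * h (s + 1) ^ 2 ≤ h s * (h (s + 1) + s * h (s + 2)) := hh.succ_mul_sq_le s
          _ ≤ h s * (h (s + 1) + s * (h (s + 1) * (1 - (s + 1) / k))) := by
              have := hh.nonneg s
              gcongr
          _ = (s + 1) * h (s + 1) * (h s * (1 - s / k)) := by field_simp; ring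
      refine le_of_mul_le_mul_left ?_ (by positivity : 0 < (s + 1) * h (s + 1))
      linear_combination moonMoser

lemma le_turanCliqueDensity (hh : IsMoonMoserSeq h) (hk : 0 < k) (hzero : h (k + 1) ≤ 0) {s : ℕ}
    (hsk : s ≤ k + 1) : h s ≤ turanCliqueDensity k s := by
  induction s with
  | zero => rw [hh.zero, turanCliqueDensity_zero]
  | succ s ih =>
    rw [turanCliqueDensity_succ hk]
    exact (hh.succ_le_mul_one_sub_div hk hzero (by lia)).trans
      (mul_le_mul_of_nonneg_right (ih (by lia)) (one_sub_div_nonneg (by lia)))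

lemma eq_turanCliqueDensity_of_le (hh : IsMoonMoserSeq h) (hk : 0 < k) (hzero : h (k + 1) ≤ 0)
    {r : ℕ} (hrk : r ≤ k) (hr : turanCliqueDensity k r ≤ h r) {s : ℕ} (hsr : s ≤ r) :
    h s = turanCliqueDensity k s := by
  refine le_antisymm (hh.le_turanCliqueDensity hk hzero (by lia)) ?_
  induction hsr using Nat.decreasingInduction with
  | self => exact hr
  | of_succ s hsr ih =>
    have ratio_pos : (0 : ℝ) < 1 - s / k :=
      sub_pos.2 ((div_lt_one (mod_cast hk)).2 (by exact_mod_cast (by lia)))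
    rw [turanCliqueDensity_succ hk] at ih
    exact le_of_mul_le_mul_right
      (ih.trans (hh.succ_le_mul_one_sub_div hk hzero (by lia))) ratio_pos

lemma turanCliqueDensity_add_two_le (hh : IsMoonMoserSeq h) (hk : 0 < k) {s : ℕ} (hs : 0 < s)
    (hsk : s ≤ k) (h_self : h s = turanCliqueDensity k s)
    (h_succ : h (s + 1) = turanCliqueDensity k (s + 1)) :
    turanCliqueDensity k (s + 2) ≤ h (s + 2) := by
  have moonMoser := hh.succ_mul_sq_le s
  rw [h_self, h_succ, succ_mul_turanCliqueDensity_succ_sq hk] at moonMoser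
  have pos : 0 < turanCliqueDensity k s * s :=
    mul_pos (turanCliqueDensity_pos hsk) (mod_cast hs)
  refine le_of_mul_le_mul_left ?_ pos
  linear_combination moonMoser

lemma eq_turanCliqueDensity (hh : IsMoonMoserSeq h) (hzero : h (k + 1) ≤ 0)
    {r : ℕ} (hr : 2 ≤ r) (hrk : r ≤ k) (hdense : turanCliqueDensity k r ≤ h r) {s : ℕ}
    (hsk : s ≤ k + 1) : h s = turanCliqueDensity k s := by
  have hk : 0 < k := by lia
  induction s using Nat.twoStepInduction with
  | zero => exact hh.eq_turanCliqueDensity_of_le hk hzero hrk hdense (by lia)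
  | one => exact hh.eq_turanCliqueDensity_of_le hk hzero hrk hdense (by lia)
  | more s ih ih' =>
    rcases s.eq_zero_or_pos with rfl | hs
    · exact hh.eq_turanCliqueDensity_of_le hk hzero hrk hdense hr
    · exact le_antisymm (hh.le_turanCliqueDensity hk hzero hsk)
        (hh.turanCliqueDensity_add_two_le hk hs (by lia) (ih (by lia)) (ih' (by lia)))

end IsMoonMoserSeq

lemma isCompact_setOf_isMoonMoserSeq : IsCompact {h | IsMoonMoserSeq h} := by
  have eq : {h | IsMoonMoserSeq h} = (Set.univ.pi fun _ => Set.Icc (0 : ℝ) 1) ∩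
      ({h | h 0 = 1} ∩
        {h | ∀ s : ℕ, (s + 1) * h (s + 1) ^ 2 ≤ h s * (h (s + 1) + s * h (s + 2))}) := by
    ext h
    exact ⟨fun hh => ⟨fun s _ => hh.mem_Icc s, hh.zero, hh.succ_mul_sq_le⟩,
      fun ⟨h_Icc, h_zero, h_le⟩ => ⟨h_zero, fun s => h_Icc s trivial, h_le⟩⟩
  rw [eq]
  refine (isCompact_univ_pi fun _ => isCompact_Icc).inter_right
    ((isClosed_eq (by fun_prop) (by fun_prop)).inter ?_)
  simp only [Set.ofPred_forall]
  exact isClosed_iInter fun s => isClosed_le (by fun_prop) (by fun_prop)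

lemma exists_pos_forall_le_imp_mem_of_isCompact {X : Type*} [TopologicalSpace X] {K U : Set X}
    (hK : IsCompact K) (hU : IsOpen U) {g : X → ℝ} (hg : Continuous g)
    (h_mem : ∀ x ∈ K, g x ≤ 0 → x ∈ U) : ∃ δ > 0, ∀ x ∈ K, g x ≤ δ → x ∈ U := by
  obtain ⟨δ, hδ, le_g⟩ := (hK.diff hU).exists_forall_le' (a := 0) hg.continuousOn
    fun x hx => not_le.1 fun hle => hx.2 (h_mem x hx.1 hle)
  refine ⟨δ / 2, half_pos hδ, fun x hx hle => by_contra fun hxU => ?_⟩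
  linarith [le_g x ⟨hx, hxU⟩]

lemma exists_forall_isMoonMoserSeq_mem {r : ℕ} (hr : 2 ≤ r) (hrk : r ≤ k) {U : Set (ℕ → ℝ)}
    (hU : IsOpen U) (h_mem : ∀ h : ℕ → ℝ, (∀ s ≤ k + 1, h s = turanCliqueDensity k s) → h ∈ U) :
    ∃ δ > 0, ∀ h, IsMoonMoserSeq h → h (k + 1) ≤ δ → turanCliqueDensity k r - δ ≤ h r → h ∈ U := by
  obtain ⟨δ, hδ, mem_U⟩ := exists_pos_forall_le_imp_mem_of_isCompact
    isCompact_setOf_isMoonMoserSeq hU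
    (g := fun h => max (h (k + 1)) (turanCliqueDensity k r - h r)) (by fun_prop)
    fun h hh hle => h_mem h fun s hs =>
      hh.eq_turanCliqueDensity ((le_max_left _ _).trans hle) hr hrk
        (sub_nonpos.1 ((le_max_right _ _).trans hle)) hs
  exact ⟨δ, hδ, fun h hh h_succ h_r => mem_U h hh (max_le h_succ (by linarith))⟩

end MoonMoser

section CliqueTuples

variable {V : Type*} [Fintype V] (P : SimpleGraph V)

open Classical in
/-- The ordered `s`-cliques of a graph: tuples of pairwise adjacent vertices. -/
noncomputable def cliqueTuples (s : ℕ) : Finset (Fin s → V) :=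
  {x | Pairwise fun i j => P.Adj (x i) (x j)}

open Classical in
/-- The vertices adjacent to every entry of a tuple. -/
noncomputable def commonNbrs {s : ℕ} (x : Fin s → V) : Finset V := {v | ∀ i, P.Adj v (x i)}

open Classical in
/-- The vertices with a non-neighbour among the entries of `x` other than the `p`-th, for every
position `p`. -/
noncomputable def uncoveredVertices {s : ℕ} (x : Fin (s + 1) → V) : Finset V :=
  {v | ∀ p : Fin (s + 1), v ∉ commonNbrs P (p.removeNth x)}

/-- The probability that `s` independent uniform vertices form an ordered clique. -/
noncomputable def cliqueDensity (s : ℕ) : ℝ := #(cliqueTuples P s) / (Fintype.card V : ℝ) ^ s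

variable {P}

lemma mem_cliqueTuples {s : ℕ} {x : Fin s → V} :
    x ∈ cliqueTuples P s ↔ Pairwise fun i j => P.Adj (x i) (x j) := by
  simp [cliqueTuples]

lemma mem_commonNbrs {s : ℕ} {x : Fin s → V} {v : V} :
    v ∈ commonNbrs P x ↔ ∀ i, P.Adj v (x i) := by
  simp [commonNbrs]

lemma mem_commonNbrs_insertNth {s : ℕ} (p : Fin (s + 1)) {x : Fin s → V} {v w : V} :
    w ∈ commonNbrs P (p.insertNth v x) ↔ P.Adj w v ∧ w ∈ commonNbrs P x := by
  simp [mem_commonNbrs, Fin.forall_iff_succAbove p]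

lemma insertNth_mem_cliqueTuples {s : ℕ} (p : Fin (s + 1)) {x : Fin s → V} {v : V} :
    p.insertNth v x ∈ cliqueTuples P (s + 1) ↔ x ∈ cliqueTuples P s ∧ v ∈ commonNbrs P x := by
  simp only [mem_cliqueTuples, mem_commonNbrs, Pairwise, Fin.forall_iff_succAbove p,
    Fin.insertNth_apply_same, Fin.insertNth_apply_succAbove, ne_eq, not_true_eq_false,
    false_imp_iff, true_and, Fin.succAbove_right_inj, (Fin.succAbove_ne p _).symm,
    Fin.succAbove_ne p _, not_false_eq_true, true_imp_iff, forall_and, P.adj_comm _ v]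
  tauto

lemma sum_cliqueTuples_succ {M : Type*} [AddCommMonoid M] {s : ℕ} (p : Fin (s + 1))
    (f : V → (Fin s → V) → M) :
    ∑ x ∈ cliqueTuples P (s + 1), f (x p) (p.removeNth x) =
      ∑ y ∈ cliqueTuples P s, ∑ v ∈ commonNbrs P y, f v y := by
  rw [← sum_finset_product_right' ((cliqueTuples P (s + 1)).map
    (Fin.insertNthEquiv (fun _ => V) p).symm.toEmbedding) (cliqueTuples P s) (commonNbrs P)]
  · simp [Fin.insertNthEquiv]
  · rintro ⟨v, y⟩
    rw [mem_map_equiv, Equiv.symm_symm]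
    exact insertNth_mem_cliqueTuples p

lemma card_cliqueTuples_succ (s : ℕ) :
    #(cliqueTuples P (s + 1)) = ∑ y ∈ cliqueTuples P s, #(commonNbrs P y) := by
  simpa only [card_eq_sum_ones] using sum_cliqueTuples_succ (P := P) (0 : Fin (s + 1)) fun _ _ => 1

open Classical in
lemma card_cliqueTuples_add_two (s : ℕ) :
    #(cliqueTuples P (s + 2)) =
      ∑ y ∈ cliqueTuples P s, #(P.interedges (commonNbrs P y) (commonNbrs P y)) := by
  have interedges_eq (y : Fin s → V) :
      #(P.interedges (commonNbrs P y) (commonNbrs P y)) =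
        ∑ v ∈ commonNbrs P y, #(commonNbrs P ((0 : Fin (s + 1)).insertNth v y)) := by
    rw [SimpleGraph.interedges, Rel.interedges, card_filter, sum_product]
    refine sum_congr rfl fun v _ => ?_
    rw [← card_filter]
    congr 1
    ext w
    simp only [mem_filter, mem_commonNbrs_insertNth, P.adj_comm v w, and_comm]
  rw [card_cliqueTuples_succ, sum_congr rfl fun y _ => interedges_eq y,
    ← sum_cliqueTuples_succ 0 fun v y => #(commonNbrs P ((0 : Fin (s + 1)).insertNth v y))]
  simp only [Fin.insertNth_self_removeNth]

lemma sum_card_commonNbrs_removeNth {s : ℕ} (p : Fin (s + 1)) :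
    ∑ x ∈ cliqueTuples P (s + 1), #(commonNbrs P (p.removeNth x)) =
      ∑ y ∈ cliqueTuples P s, #(commonNbrs P y) ^ 2 := by
  rw [sum_cliqueTuples_succ p fun _ y => #(commonNbrs P y)]
  simp only [sum_const, smul_eq_mul, sq]

open Classical in
lemma sum_card_interedges_removeNth_le {s : ℕ} (p : Fin (s + 1)) :
    ∑ x ∈ cliqueTuples P (s + 1),
        #(P.interedges (commonNbrs P (p.removeNth x)) (commonNbrs P (p.removeNth x))) ≤
      Fintype.card V * #(cliqueTuples P (s + 2)) := by
  rw [sum_cliqueTuples_succ p fun _ y => #(P.interedges (commonNbrs P y) (commonNbrs P y)),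
    card_cliqueTuples_add_two, mul_sum]
  refine sum_le_sum fun y _ => ?_
  rw [sum_const, smul_eq_mul]
  gcongr
  exact card_le_univ _

lemma sum_card_commonNbrs_removeNth_add_card_uncovered_le {s : ℕ} (x : Fin (s + 1) → V) :
    ∑ p : Fin (s + 1), #(commonNbrs P (p.removeNth x)) + #(uncoveredVertices P x) ≤
      Fintype.card V + s * #(commonNbrs P x) := by
  classical
  have removeNth_iff {v : V} {i p : Fin (s + 1)} (hi : ¬ P.Adj v (x i))
      (hp : v ∈ commonNbrs P (p.removeNth x)) : p = i := by
    by_contra hne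
    obtain ⟨j, rfl⟩ := Fin.exists_succAbove_eq (Ne.symm hne)
    exact hi (mem_commonNbrs.1 hp j)
  have pointwise (v : V) : #{p : Fin (s + 1) | v ∈ commonNbrs P (p.removeNth x)} +
      (if ∀ p : Fin (s + 1), v ∉ commonNbrs P (p.removeNth x) then 1 else 0) ≤
        1 + s * if v ∈ commonNbrs P x then 1 else 0 := by
    by_cases hv : v ∈ commonNbrs P x
    · have mem_all (p : Fin (s + 1)) : v ∈ commonNbrs P (p.removeNth x) :=
        mem_commonNbrs.2 fun j => mem_commonNbrs.1 hv _
      simp [mem_all, hv, add_comm]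
    · obtain ⟨i, hi⟩ : ∃ i, ¬ P.Adj v (x i) := by simpa [mem_commonNbrs] using hv
      split_ifs with h
      · simp [h]
      · simpa using card_le_one.2 fun p hp q hq =>
          (removeNth_iff hi (mem_filter.1 hp).2).trans (removeNth_iff hi (mem_filter.1 hq).2).symm
  calc _ = ∑ v : V, (#{p : Fin (s + 1) | v ∈ commonNbrs P (p.removeNth x)} +
        if ∀ p : Fin (s + 1), v ∉ commonNbrs P (p.removeNth x) then 1 else 0) := by
        rw [sum_add_distrib, ← card_filter, uncoveredVertices]
        simp only [card_filter]
        rw [sum_comm]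
        simp
    _ ≤ ∑ v : V, (1 + s * if v ∈ commonNbrs P x then 1 else 0) := sum_le_sum fun v _ => pointwise v
    _ = _ := by simp [sum_add_distrib, mul_comm]

lemma sum_card_uncovered_add_succ_mul_sum_card_commonNbrs_sq_le (s : ℕ) :
    ∑ x ∈ cliqueTuples P (s + 1), #(uncoveredVertices P x) +
        (s + 1) * ∑ y ∈ cliqueTuples P s, #(commonNbrs P y) ^ 2 ≤
      Fintype.card V * #(cliqueTuples P (s + 1)) + s * #(cliqueTuples P (s + 2)) := by
  have sum_eq : ∑ x ∈ cliqueTuples P (s + 1), ∑ p : Fin (s + 1), #(commonNbrs P (p.removeNth x)) =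
      (s + 1) * ∑ y ∈ cliqueTuples P s, #(commonNbrs P y) ^ 2 := by
    simp [sum_comm (s := cliqueTuples P (s + 1)), sum_card_commonNbrs_removeNth]
  rw [← sum_eq, add_comm, ← sum_add_distrib]
  calc _ ≤ ∑ x ∈ cliqueTuples P (s + 1), (Fintype.card V + s * #(commonNbrs P x)) :=
        sum_le_sum fun x _ => sum_card_commonNbrs_removeNth_add_card_uncovered_le x
    _ = _ := by
        rw [sum_add_distrib, ← mul_sum, ← card_cliqueTuples_succ (s + 1), sum_const, smul_eq_mul,
          mul_comm]

lemma card_cliqueTuples_succ_sq_le_card_mul_sum (s : ℕ) :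
    #(cliqueTuples P (s + 1)) ^ 2 ≤
      #(cliqueTuples P s) * ∑ y ∈ cliqueTuples P s, #(commonNbrs P y) ^ 2 := by
  rw [card_cliqueTuples_succ]
  exact sq_sum_le_card_mul_sum_sq

lemma succ_mul_card_cliqueTuples_succ_sq_le (s : ℕ) :
    (s + 1) * #(cliqueTuples P (s + 1)) ^ 2 ≤ #(cliqueTuples P s) *
      (Fintype.card V * #(cliqueTuples P (s + 1)) + s * #(cliqueTuples P (s + 2))) :=
  calc (s + 1) * #(cliqueTuples P (s + 1)) ^ 2
      ≤ (s + 1) * (#(cliqueTuples P s) * ∑ y ∈ cliqueTuples P s, #(commonNbrs P y) ^ 2) := by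
        gcongr
        exact card_cliqueTuples_succ_sq_le_card_mul_sum s
    _ = #(cliqueTuples P s) * ((s + 1) * ∑ y ∈ cliqueTuples P s, #(commonNbrs P y) ^ 2) := by ring
    _ ≤ _ := by
        gcongr
        exact (Nat.le_add_left _ _).trans
          (sum_card_uncovered_add_succ_mul_sum_card_commonNbrs_sq_le s)

lemma card_cliqueTuples_zero : #(cliqueTuples P 0) = 1 := by
  simp [cliqueTuples, Pairwise]

lemma card_cliqueTuples_eq [Nonempty V] (s : ℕ) :
    (#(cliqueTuples P s) : ℝ) = cliqueDensity P s * (Fintype.card V : ℝ) ^ s := by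
  rw [cliqueDensity, div_mul_cancel₀ _ (by simp)]

lemma isMoonMoserSeq_cliqueDensity [Nonempty V] : IsMoonMoserSeq (cliqueDensity P) where
  zero := by simp [cliqueDensity, card_cliqueTuples_zero]
  mem_Icc s := by
    refine ⟨by unfold cliqueDensity; positivity, div_le_one_of_le₀ ?_ (by positivity)⟩
    exact_mod_cast (card_le_univ (cliqueTuples P s)).trans_eq (by simp)
  succ_mul_sq_le s := by
    have card_pos : 0 < (Fintype.card V : ℝ) := by simp [Fintype.card_pos]
    have moonMoser : ((s + 1) * #(cliqueTuples P (s + 1)) ^ 2 : ℝ) ≤ #(cliqueTuples P s) *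
        (Fintype.card V * #(cliqueTuples P (s + 1)) + s * #(cliqueTuples P (s + 2))) := by
      exact_mod_cast succ_mul_card_cliqueTuples_succ_sq_le s
    simp only [card_cliqueTuples_eq] at moonMoser
    refine le_of_mul_le_mul_right ?_ (pow_pos card_pos (2 * s + 2))
    linear_combination moonMoser

end CliqueTuples

section Structure

variable {V : Type*} [Fintype V] {P : SimpleGraph V}

open Classical in
/-- A bound for the number of monochromatic pairs when every covered vertex gets as its colour a
position `p` of the clique `x` such that it is adjacent to all entries of `x` but the `p`-th. -/
noncomputable def coloringDefect {s : ℕ} (P : SimpleGraph V) (x : Fin (s + 1) → V) : ℕ :=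
  ∑ p : Fin (s + 1),
      #(P.interedges (commonNbrs P (p.removeNth x)) (commonNbrs P (p.removeNth x))) +
    2 * (Fintype.card V * #(uncoveredVertices P x))

open Classical in
/-- The ordered pairs of adjacent vertices that receive the same colour. -/
noncomputable def monochromaticPairs {ι : Type*} [DecidableEq ι] (P : SimpleGraph V) (c : V → ι) :
    Finset (V × V) :=
  {e | P.Adj e.1 e.2 ∧ c e.1 = c e.2}

lemma exists_coloring_card_monochromaticPairs_le {s : ℕ} (x : Fin (s + 1) → V) :
    ∃ c : V → Fin (s + 1), #(monochromaticPairs P c) ≤ coloringDefect P x := by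
  classical
  let N (p : Fin (s + 1)) := commonNbrs P (p.removeNth x)
  have exists_color (v : V) : ∃ p, v ∉ uncoveredVertices P x → v ∈ N p := by
    by_cases h : ∃ p, v ∈ N p
    · exact h.imp fun p hp _ => hp
    · exact ⟨0, fun hv => absurd (mem_filter.2 ⟨mem_univ v, not_exists.1 h⟩) hv⟩
  choose c hc using exists_color
  have subset : monochromaticPairs P c ⊆ (univ.biUnion fun p => P.interedges (N p) (N p)) ∪
      (uncoveredVertices P x ×ˢ univ ∪ univ ×ˢ uncoveredVertices P x) := by
    rintro ⟨v, w⟩ hvw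
    obtain ⟨hadj, hcvw⟩ := (mem_filter.1 hvw).2
    by_cases hv : v ∈ uncoveredVertices P x
    · simp [hv]
    by_cases hw : w ∈ uncoveredVertices P x
    · simp [hw]
    exact mem_union_left _ (mem_biUnion.2 ⟨c v, mem_univ _,
      (P.mem_interedges_iff).2 ⟨hc v hv, by rw [hcvw]; exact hc w hw, hadj⟩⟩)
  refine ⟨c, (card_le_card subset).trans ((card_union_le _ _).trans ?_)⟩
  refine add_le_add card_biUnion_le ((card_union_le _ _).trans_eq ?_)
  rw [card_product, card_product, card_univ, two_mul, mul_comm]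

lemma card_mul_sum_coloringDefect_add_le (s : ℕ) :
    #(cliqueTuples P s) * ∑ x ∈ cliqueTuples P (s + 1), coloringDefect P x +
        2 * Fintype.card V * (s + 1) * #(cliqueTuples P (s + 1)) ^ 2 ≤
      #(cliqueTuples P s) * Fintype.card V *
        ((3 * s + 1) * #(cliqueTuples P (s + 2)) +
          2 * Fintype.card V * #(cliqueTuples P (s + 1))) := by
  classical
  have sum_interedges_le : ∑ x ∈ cliqueTuples P (s + 1), ∑ p : Fin (s + 1),
      #(P.interedges (commonNbrs P (p.removeNth x)) (commonNbrs P (p.removeNth x))) ≤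
        (s + 1) * (Fintype.card V * #(cliqueTuples P (s + 2))) := by
    rw [sum_comm]
    exact (sum_le_sum fun p _ => sum_card_interedges_removeNth_le p).trans_eq (by simp)
  have sum_uncovered_le := sum_card_uncovered_add_succ_mul_sum_card_commonNbrs_sq_le (P := P) s
  have cauchy := card_cliqueTuples_succ_sq_le_card_mul_sum (P := P) s
  simp only [coloringDefect, sum_add_distrib, ← mul_sum]
  zify at *
  linear_combination (2 * Fintype.card V * (s + 1) : ℤ) * cauchy +
    (#(cliqueTuples P s) : ℤ) * (sum_interedges_le + (2 * Fintype.card V : ℤ) * sum_uncovered_le)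

lemma exists_coloringDefect_le [Nonempty V] {s : ℕ} {ε : ℝ} (h_pos : 0 < cliqueDensity P (s + 1))
    (h_le : cliqueDensity P s *
        ((3 * s + 1) * cliqueDensity P (s + 2) + 2 * cliqueDensity P (s + 1)) ≤
      cliqueDensity P (s + 1) *
        (2 * (s + 1) * cliqueDensity P (s + 1) + ε * cliqueDensity P s)) :
    ∃ x : Fin (s + 1) → V, (coloringDefect P x : ℝ) ≤ ε * Fintype.card V ^ 2 := by
  have card_pos : 0 < (Fintype.card V : ℝ) := by simp [Fintype.card_pos]
  have tuples_pos : 0 < #(cliqueTuples P (s + 1)) := by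
    rify
    rw [card_cliqueTuples_eq]
    positivity
  have tuples_pos' : 0 < (#(cliqueTuples P s) : ℝ) := by
    have := (pow_pos tuples_pos 2).trans_le (card_cliqueTuples_succ_sq_le_card_mul_sum s)
    exact_mod_cast pos_of_mul_pos_left this (Nat.zero_le _)
  have sum_le : (#(cliqueTuples P s) * ∑ x ∈ cliqueTuples P (s + 1), (coloringDefect P x : ℝ) +
        2 * Fintype.card V * (s + 1) * #(cliqueTuples P (s + 1)) ^ 2 : ℝ) ≤
      #(cliqueTuples P s) * Fintype.card V * ((3 * s + 1) * #(cliqueTuples P (s + 2)) +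
        2 * Fintype.card V * #(cliqueTuples P (s + 1))) := by
    exact_mod_cast card_mul_sum_coloringDefect_add_le s
  suffices ∃ x ∈ cliqueTuples P (s + 1), (coloringDefect P x : ℝ) ≤ ε * Fintype.card V ^ 2 from
    this.imp fun _ => And.right
  refine exists_le_of_sum_le (Finset.card_pos.1 tuples_pos) ?_
  rw [sum_const, nsmul_eq_mul]
  refine le_of_mul_le_mul_left ?_ tuples_pos'
  have scaled := mul_le_mul_of_nonneg_left h_le (pow_pos card_pos (2 * s + 3)).le
  simp only [card_cliqueTuples_eq] at sum_le ⊢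
  linear_combination scaled + sum_le

open Classical in
lemma card_cliqueTuples_two : #(cliqueTuples P 2) = #{e : V × V | P.Adj e.1 e.2} := by
  rw [card_cliqueTuples_add_two, cliqueTuples]
  simp [commonNbrs, SimpleGraph.interedges, Rel.interedges, Pairwise]

variable {ι : Type*} [Fintype ι] [DecidableEq ι]

lemma sum_card_fiber_sq (c : V → ι) :
    ∑ i, #{v | c v = i} ^ 2 = #{e : V × V | c e.1 = c e.2} := by
  rw [card_eq_sum_card_fiberwise fun e _ => mem_coe.2 (mem_univ (c e.1))]
  refine sum_congr rfl fun i _ => ?_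
  rw [sq, ← card_product]
  congr 1
  ext ⟨v, w⟩
  simp only [mem_product, mem_filter, mem_univ, true_and]
  constructor
  · rintro ⟨rfl, hw⟩
    exact ⟨hw.symm, rfl⟩
  · rintro ⟨hvw, rfl⟩
    exact ⟨rfl, hvw.symm⟩

open Classical in
lemma card_cliqueTuples_two_add_sum_card_fiber_sq_le (c : V → ι) :
    #(cliqueTuples P 2) + ∑ i, #{v | c v = i} ^ 2 ≤
      Fintype.card V ^ 2 + #(monochromaticPairs P c) := by
  rw [card_cliqueTuples_two, sum_card_fiber_sq, ← card_union_add_card_inter, ← filter_or,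
    ← filter_and, sq, ← Fintype.card_prod]
  exact Nat.add_le_add_right (card_le_univ _) _

lemma sq_card_fiber_sub_le [Nonempty ι] (c : V → ι) (i : ι) :
    (#{v | c v = i} - Fintype.card V / Fintype.card ι : ℝ) ^ 2 ≤
      (1 - 1 / Fintype.card ι) * Fintype.card V ^ 2 + #(monochromaticPairs P c) -
        #(cliqueTuples P 2) := by
  have sum_card : ∑ j, (#{v | c v = j} : ℝ) = Fintype.card V := by
    exact_mod_cast (card_eq_sum_card_fiberwise fun v _ => mem_coe.2 (mem_univ (c v))).symm
  have sum_sq_le : (#(cliqueTuples P 2) + ∑ j, (#{v | c v = j} : ℝ) ^ 2 : ℝ) ≤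
      Fintype.card V ^ 2 + #(monochromaticPairs P c) := by
    exact_mod_cast card_cliqueTuples_two_add_sum_card_fiber_sq_le c
  calc (#{v | c v = i} - Fintype.card V / Fintype.card ι : ℝ) ^ 2
      ≤ ∑ j, (#{v | c v = j} - Fintype.card V / Fintype.card ι : ℝ) ^ 2 :=
        single_le_sum (f := fun j => (#{v | c v = j} - Fintype.card V / Fintype.card ι : ℝ) ^ 2)
          (fun j _ => sq_nonneg _) (mem_univ i)
    _ = ∑ j, (#{v | c v = j} : ℝ) ^ 2 - Fintype.card V ^ 2 / Fintype.card ι := by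
        simp only [sub_sq, sum_add_distrib, sum_sub_distrib, ← sum_mul, ← mul_sum, sum_card,
          sum_const, card_univ, nsmul_eq_mul]
        field_simp
        ring
    _ ≤ _ := by linear_combination sum_sq_le

/-- The sequences whose values at `2`, `s`, `s + 1` and `s + 2` are close enough to those of
`turanCliqueDensity (s + 1)` for the averaging over `(s + 1)`-cliques to give a colouring of small
defect with classes of nearly equal sizes. The quotients are cleared so that no value needs to be
nonzero. -/
def nearTuranSequences (s : ℕ) (ε : ℝ) : Set (ℕ → ℝ) :=
  {h | 1 - 1 / (s + 1) - ε < h 2 ∧ 0 < h (s + 1) ∧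
    h s * ((3 * s + 1) * h (s + 2) + 2 * h (s + 1)) <
      h (s + 1) * (2 * (s + 1) * h (s + 1) + ε * h s)}

lemma isOpen_nearTuranSequences (s : ℕ) (ε : ℝ) : IsOpen (nearTuranSequences s ε) :=
  .and (isOpen_lt (by fun_prop) (by fun_prop)) <|
    .and (isOpen_lt (by fun_prop) (by fun_prop)) (isOpen_lt (by fun_prop) (by fun_prop))

lemma mem_nearTuranSequences {s : ℕ} {ε : ℝ} (hε : 0 < ε) {h : ℕ → ℝ}
    (h_eq : ∀ t ≤ s + 2, h t = turanCliqueDensity (s + 1) t) : h ∈ nearTuranSequences s ε := by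
  have pos : 0 < turanCliqueDensity (s + 1) s := turanCliqueDensity_pos (by lia)
  have succ : turanCliqueDensity (s + 1) (s + 1) =
      turanCliqueDensity (s + 1) s * (1 - s / (s + 1)) := by
    exact_mod_cast turanCliqueDensity_succ s.succ_pos s
  have two : turanCliqueDensity (s + 1) 2 = 1 - 1 / (s + 1) := by
    simp [turanCliqueDensity_succ s.succ_pos, turanCliqueDensity_zero]
  have pos' : 0 < turanCliqueDensity (s + 1) (s + 1) := turanCliqueDensity_pos le_rfl
  rw [nearTuranSequences, Set.mem_ofPred_eq, h_eq 2 (by lia), h_eq s (by lia),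
    h_eq (s + 1) (by lia), h_eq (s + 2) le_rfl, turanCliqueDensity_self_succ, two]
  refine ⟨by linarith, pos', ?_⟩
  have succ_mul : (s + 1) * turanCliqueDensity (s + 1) (s + 1) = turanCliqueDensity (s + 1) s := by
    rw [succ]
    field_simp
    ring
  linear_combination -2 * turanCliqueDensity (s + 1) (s + 1) * succ_mul + ε * mul_pos pos' pos

lemma exists_balanced_coloring {k r : ℕ} (hr : 2 ≤ r) (hrk : r ≤ k) {ε : ℝ} (hε : 0 < ε) :
    ∃ δ > 0, ∀ (V : Type*) [Fintype V] [Nonempty V] (P : SimpleGraph V),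
      cliqueDensity P (k + 1) ≤ δ → turanCliqueDensity k r - δ ≤ cliqueDensity P r →
      ∃ c : V → Fin k, #(monochromaticPairs P c) ≤ ε * Fintype.card V ^ 2 ∧
        ∀ i, |(#{v | c v = i} - Fintype.card V / k : ℝ)| ≤ ε * Fintype.card V := by
  obtain ⟨s, rfl⟩ : ∃ s, k = s + 1 := ⟨k - 1, by lia⟩
  obtain ⟨ε', hε', hε'ε, hε'ε_sq⟩ : ∃ ε' > 0, ε' ≤ ε ∧ 2 * ε' ≤ ε ^ 2 :=
    ⟨min ε (ε ^ 2 / 2), by positivity, min_le_left _ _, by linarith [min_le_right ε (ε ^ 2 / 2)]⟩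
  obtain ⟨δ, hδ, mem_near⟩ := exists_forall_isMoonMoserSeq_mem hr hrk
    (isOpen_nearTuranSequences s ε') fun h => mem_nearTuranSequences hε'
  refine ⟨δ, hδ, fun V _ _ P h_succ h_r => ?_⟩
  obtain ⟨h_two, h_pos, h_lt⟩ := mem_near _ isMoonMoserSeq_cliqueDensity h_succ h_r
  obtain ⟨x, defect_le⟩ := exists_coloringDefect_le h_pos h_lt.le
  obtain ⟨c, mono_le⟩ := exists_coloring_card_monochromaticPairs_le x
  have mono_le' : (#(monochromaticPairs P c) : ℝ) ≤ ε' * Fintype.card V ^ 2 :=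
    (Nat.cast_le.2 mono_le).trans defect_le
  refine ⟨c, mono_le'.trans (by gcongr), fun i => abs_le_of_sq_le_sq ?_ (by positivity)⟩
  have two_le : (1 - 1 / (s + 1) - ε') * Fintype.card V ^ 2 ≤ #(cliqueTuples P 2) := by
    rw [card_cliqueTuples_eq]
    gcongr
  calc (#{v | c v = i} - Fintype.card V / (s + 1 : ℕ) : ℝ) ^ 2
      ≤ (1 - 1 / (s + 1) : ℝ) * (Fintype.card V : ℝ) ^ 2 + #(monochromaticPairs P c) -
        #(cliqueTuples P 2) := by simpa using sq_card_fiber_sub_le (P := P) c i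
    _ ≤ 2 * ε' * Fintype.card V ^ 2 := by linear_combination mono_le' + two_le
    _ ≤ (ε * Fintype.card V) ^ 2 := by
        rw [mul_pow]
        gcongr

end Structure

section Box

lemma eventually_mul_pow_le_descFactorial (s : ℕ) {ε : ℝ} (hε : 0 < ε) :
    ∀ᶠ n : ℕ in Filter.atTop, (1 - ε) * (n : ℝ) ^ s ≤ n.descFactorial s := by
  filter_upwards [(isEquivalent_descFactorial s).isLittleO.bound hε] with n hn
  rw [Pi.sub_apply, Real.norm_of_nonneg (by positivity : 0 ≤ (n : ℝ) ^ s)] at hn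
  linarith [neg_le_of_abs_le hn]

lemma card_filter_injective (T V : Type*) [Fintype T] [DecidableEq T]
    [Fintype V] [DecidablePred (Function.Injective : (T → V) → Prop)] :
    #{f : T → V | f.Injective} = (Fintype.card V).descFactorial (Fintype.card T) := by
  rw [← Fintype.card_embedding_eq, ← Fintype.card_subtype]
  exact Fintype.card_congr (Equiv.subtypeInjectiveEquivEmbedding T V)

variable {V Z : Type*} [Fintype V] [Fintype Z]

open Classical in
lemma sum_card_commonLink (T : Type*) [Fintype T] (R : V → Z → Prop) :
    ∑ f : T → V, #{z | ∀ t, R (f t) z} = ∑ z, #{v | R v z} ^ Fintype.card T := by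
  have piFinset_eq (z : Z) :
      ({f | ∀ t, R (f t) z} : Finset (T → V)) = Fintype.piFinset fun _ => {v | R v z} := by
    ext f
    simp
  have := sum_card_bipartiteAbove_eq_sum_card_bipartiteBelow (s := univ) (t := univ)
    fun (f : T → V) z => ∀ t, R (f t) z
  simpa [bipartiteAbove, bipartiteBelow, piFinset_eq, Fintype.card_piFinset] using this

open Classical in
lemma pow_mul_le_sum_card_commonLink (T : Type*) [Fintype T] {R : V → Z → Prop} {p : ℝ}
    (hp : 0 ≤ p) (hR : p * Fintype.card V * Fintype.card Z ≤ #{x : V × Z | R x.1 x.2}) :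
    p ^ Fintype.card T * Fintype.card V ^ Fintype.card T * Fintype.card Z ≤
      ∑ f : T → V, (#{z | ∀ t, R (f t) z} : ℝ) := by
  rcases isEmpty_or_nonempty Z with _ | _
  · simp
  have card_pos : 0 < (Fintype.card Z : ℝ) := by simp [Fintype.card_pos]
  have sum_eq : (∑ z, #{v | R v z} : ℝ) = #{x : V × Z | R x.1 x.2} := by
    simp only [card_filter, Fintype.sum_prod_type_right, Nat.cast_sum]
  have mul_card_le : p * Fintype.card V ≤ (Fintype.card Z : ℝ)⁻¹ * #{x : V × Z | R x.1 x.2} := by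
    rwa [inv_mul_eq_div, le_div_iff₀ card_pos]
  have jensen := Real.pow_arith_mean_le_arith_mean_pow univ (fun _ : Z => (Fintype.card Z : ℝ)⁻¹)
    (fun z => (#{v | R v z} : ℝ)) (fun _ _ => by positivity) (by simp) (fun _ _ => by positivity)
    (Fintype.card T)
  rw [← mul_sum, ← mul_sum, sum_eq] at jensen
  calc p ^ Fintype.card T * Fintype.card V ^ Fintype.card T * Fintype.card Z
      = (p * Fintype.card V) ^ Fintype.card T * Fintype.card Z := by rw [mul_pow]
    _ ≤ (Fintype.card Z : ℝ)⁻¹ * (∑ z, (#{v | R v z} : ℝ) ^ Fintype.card T) * Fintype.card Z :=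
        mul_le_mul_of_nonneg_right
          ((pow_le_pow_left₀ (by positivity) mul_card_le _).trans jensen) card_pos.le
    _ = ∑ f : T → V, (#{z | ∀ t, R (f t) z} : ℝ) := by
        rw [mul_right_comm, inv_mul_cancel₀ card_pos.ne', one_mul]
        exact_mod_cast (sum_card_commonLink T R).symm

open Classical in
lemma exists_injective_le_card_commonLink (T : Type*) [Fintype T] {p : ℝ} (hp : 0 < p) :
    ∃ n₀ : ℕ, ∀ (V Z : Type*) [Fintype V] [Fintype Z] [Nonempty Z] (R : V → Z → Prop),
      n₀ ≤ Fintype.card V → p * Fintype.card V * Fintype.card Z ≤ #{x : V × Z | R x.1 x.2} →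
      ∃ f : T → V, f.Injective ∧
        p ^ Fintype.card T / 2 * Fintype.card Z ≤ #{z | ∀ t, R (f t) z} := by
  set m := Fintype.card T with hm
  obtain ⟨n₀, hn₀⟩ := Filter.eventually_atTop.1
    (eventually_mul_pow_le_descFactorial m (by positivity : 0 < p ^ m / 4))
  refine ⟨n₀ + 1, fun V Z _ _ _ R hV hR => ?_⟩
  by_contra! few
  have V_pos : 0 < (Fintype.card V : ℝ) := by exact_mod_cast (by lia : 0 < Fintype.card V)
  have Z_pos : 0 < (Fintype.card Z : ℝ) := by simp [Fintype.card_pos]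
  have card_not_injective_le :
      (#{f : T → V | ¬ f.Injective} : ℝ) ≤ p ^ m / 4 * Fintype.card V ^ m := by
    have card_add : (#{f : T → V | f.Injective} + #{f : T → V | ¬ f.Injective} : ℝ) =
        Fintype.card V ^ m := by
      exact_mod_cast (card_filter_add_card_filter_not _).trans (by simp [hm])
    rw [card_filter_injective, ← hm] at card_add
    linarith [hn₀ (Fintype.card V) (by lia)]
  have sum_le : ∑ f : T → V, (#{z | ∀ t, R (f t) z} : ℝ) ≤
      ∑ f : T → V, (p ^ m / 2 * Fintype.card Z +
        if ¬ f.Injective then (Fintype.card Z : ℝ) else 0) := by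
    refine sum_le_sum fun f _ => ?_
    by_cases hf : f.Injective
    · simpa [hf] using (few f hf).le
    · have : (#{z | ∀ t, R (f t) z} : ℝ) ≤ Fintype.card Z := by exact_mod_cast card_le_univ _
      rw [if_pos hf]
      linarith [mul_pos (pow_pos hp m) Z_pos]
  have sum_eq : ∑ f : T → V, (p ^ m / 2 * Fintype.card Z +
        if ¬ f.Injective then (Fintype.card Z : ℝ) else 0) =
      Fintype.card V ^ m * (p ^ m / 2 * Fintype.card Z) +
        #{f : T → V | ¬ f.Injective} * Fintype.card Z := by
    rw [sum_add_distrib, ← sum_filter, sum_const, sum_const, nsmul_eq_mul, nsmul_eq_mul, card_univ,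
      Fintype.card_fun, Nat.cast_pow, ← hm]
  have lower := pow_mul_le_sum_card_commonLink T hp.le hR
  have : 0 < p ^ m * Fintype.card V ^ m * Fintype.card Z := by positivity
  linarith [mul_le_mul_of_nonneg_right card_not_injective_le Z_pos.le]

/-- This is Erdős's theorem on complete partite sub-hypergraphs; in the induction on `l`, convexity
provides an injective choice in the first coordinate whose common link is still dense. -/
theorem exists_box_subset (T : Type*) [Finite T] (l : ℕ) {p : ℝ} (hp : 0 < p) :
    ∃ n₀ : ℕ, ∀ (V : Type*) [Fintype V] (S : Finset (Fin l → V)), n₀ ≤ Fintype.card V →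
      p * (Fintype.card V : ℝ) ^ l ≤ #S →
      ∃ y : Fin l → T → V, (∀ i, (y i).Injective) ∧ ∀ s : Fin l → T, (fun i => y i (s i)) ∈ S := by
  classical
  cases nonempty_fintype T
  induction l generalizing p with
  | zero =>
    refine ⟨0, fun V _ S _ hS => ⟨Fin.elim0, fun i => i.elim0, fun s => ?_⟩⟩
    have : 0 < (#S : ℝ) := hp.trans_le (by simpa using hS)
    obtain ⟨x, hx⟩ := card_pos.1 (Nat.cast_pos.1 this)
    rwa [Subsingleton.elim (fun i => _) x]
  | succ l ih =>
    obtain ⟨n₁, exists_link⟩ := exists_injective_le_card_commonLink T hp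
    obtain ⟨n₂, exists_box⟩ := ih (by positivity : 0 < p ^ Fintype.card T / 2)
    refine ⟨max (max n₁ n₂) 1, fun V _ S hV hS => ?_⟩
    have : Nonempty V := Fintype.card_pos_iff.1 (by lia)
    have card_eq :
        #S = #{x : V × (Fin l → V) | (Fin.cons x.1 x.2 : Fin (l + 1) → V) ∈ S} := by
      rw [← card_map (Fin.consEquiv fun _ : Fin (l + 1) => V).symm.toEmbedding]
      congr 1
      ext x
      simp [mem_map_equiv, Fin.consEquiv]
    obtain ⟨f, f_inj, link_le⟩ := exists_link V (Fin l → V) (fun v z => Fin.cons v z ∈ S)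
      (by lia) (by
        rw [card_eq, pow_succ', ← mul_assoc] at hS
        convert hS
        simp)
    obtain ⟨y, y_inj, y_mem⟩ := exists_box V _ (by lia) (by simpa using link_le)
    refine ⟨Fin.cons f y, Fin.forall_fin_succ.2 ⟨f_inj, y_inj⟩, fun s => ?_⟩
    have cons_mem : ∀ t, Fin.cons (f t) (fun i => y i (Fin.tail s i)) ∈ S := by
      simpa using y_mem (Fin.tail s)
    convert cons_mem (s 0) using 1
    ext i
    cases i using Fin.cases <;> rfl

end Box

section RGraph

variable {V : Type*} {r : ℕ} {G : Finset (Finset V)}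

open Classical in
/-- The edges of a hypergraph that do not span a clique in a given graph. -/
noncomputable def nonCliqueEdges (G : Finset (Finset V)) (P : SimpleGraph V) :
    Finset (Finset V) :=
  {e ∈ G | ¬ P.IsClique e}

open Classical in
/-- The edges of a hypergraph with two vertices of the same colour. -/
noncomputable def nonTransversalEdges {ι : Type*} (G : Finset (Finset V)) (c : V → ι) :
    Finset (Finset V) :=
  {e ∈ G | ¬ Set.InjOn c e}

lemma mem_nonCliqueEdges {P : SimpleGraph V} {e : Finset V} :
    e ∈ nonCliqueEdges G P ↔ e ∈ G ∧ ¬ P.IsClique e := by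
  simp [nonCliqueEdges]

lemma mem_nonTransversalEdges {ι : Type*} {c : V → ι} {e : Finset V} :
    e ∈ nonTransversalEdges G c ↔ e ∈ G ∧ ¬ Set.InjOn c e := by
  simp [nonTransversalEdges]

variable [DecidableEq V]

/-- The edges of a hypergraph that contain a given set; their number is the degree of the set. -/
def edgesContaining (G : Finset (Finset V)) (U : Finset V) : Finset (Finset V) := {e ∈ G | U ⊆ e}

lemma mem_edgesContaining {U e : Finset V} : e ∈ edgesContaining G U ↔ e ∈ G ∧ U ⊆ e := by
  simp [edgesContaining]

variable [Fintype V]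

/-- The graph formed by the pairs whose degree in `G` is at least `γ n ^ (r - 2)`. The inequality is
multiplied by `n ^ 2` to avoid truncated subtraction. -/
noncomputable def heavyGraph (r : ℕ) (G : Finset (Finset V)) (γ : ℝ) : SimpleGraph V where
  Adj u v := u ≠ v ∧
    γ * Fintype.card V ^ r ≤ #(edgesContaining G {u, v}) * (Fintype.card V : ℝ) ^ 2
  symm := ⟨fun u v h => by rwa [pair_comm, ne_comm]⟩
  loopless := ⟨fun _ h => h.1 rfl⟩

lemma card_edgesContaining_mul_le (hG : IsRGraph r G) (U : Finset V) :
    #(edgesContaining G U) * Fintype.card V ^ #U ≤ Fintype.card V ^ r := by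
  rcases le_or_gt #U r with hU | hU
  · have card_le : #(edgesContaining G U) ≤ Fintype.card V ^ (r - #U) := by
      calc #(edgesContaining G U) ≤ #((univ : Finset V).powersetCard (r - #U)) := by
            refine card_le_card_of_injOn (· \ U) (fun e he => ?_) fun e he e' he' h => ?_
            · obtain ⟨heG, hUe⟩ := mem_edgesContaining.1 he
              exact mem_powersetCard.2
                ⟨subset_univ _, by rw [card_sdiff_of_subset hUe, hG e heG]⟩
            · rw [← union_sdiff_of_subset (mem_edgesContaining.1 he).2,
                ← union_sdiff_of_subset (mem_edgesContaining.1 he').2]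
              exact congrArg _ h
        _ ≤ Fintype.card V ^ (r - #U) := by
            rw [card_powersetCard, card_univ]
            exact Nat.choose_le_pow _ _
    calc #(edgesContaining G U) * Fintype.card V ^ #U
        ≤ Fintype.card V ^ (r - #U) * Fintype.card V ^ #U := Nat.mul_le_mul_right _ card_le
      _ = Fintype.card V ^ r := by rw [← pow_add, Nat.sub_add_cancel hU]
  · have eq_empty : edgesContaining G U = ∅ := eq_empty_of_forall_notMem fun e he => by
      obtain ⟨heG, hUe⟩ := mem_edgesContaining.1 he
      exact (hG e heG ▸ hU).not_ge (card_le_card hUe)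
    simp [eq_empty]

lemma card_biUnion_edgesContaining_mul_le {ι : Type*} (hG : IsRGraph r G) (S : Finset ι)
    {U : ι → Finset V} {m : ℕ} (hU : ∀ i ∈ S, #(U i) = m) :
    #(S.biUnion fun i => edgesContaining G (U i)) * Fintype.card V ^ m ≤
      #S * Fintype.card V ^ r :=
  calc #(S.biUnion fun i => edgesContaining G (U i)) * Fintype.card V ^ m
      ≤ ∑ i ∈ S, #(edgesContaining G (U i)) * Fintype.card V ^ m := by
        rw [← sum_mul]
        exact Nat.mul_le_mul_right _ card_biUnion_le
    _ ≤ #S * Fintype.card V ^ r := by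
        rw [← smul_eq_mul]
        exact sum_le_card_nsmul _ _ _ fun i hi => hU i hi ▸ card_edgesContaining_mul_le hG (U i)

lemma card_nonCliqueEdges_heavyGraph_le [Nonempty V] {γ : ℝ} (hγ : 0 ≤ γ) :
    (#(nonCliqueEdges G (heavyGraph r G γ)) : ℝ) ≤ γ * Fintype.card V ^ r := by
  classical
  let L : Finset (V × V) := {p | p.1 ≠ p.2 ∧ ¬ (heavyGraph r G γ).Adj p.1 p.2}
  have subset : nonCliqueEdges G (heavyGraph r G γ) ⊆
      L.biUnion fun p => edgesContaining G {p.1, p.2} := by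
    intro e he
    obtain ⟨heG, not_clique⟩ := mem_nonCliqueEdges.1 he
    simp only [SimpleGraph.isClique_iff, Set.Pairwise, not_forall, mem_coe] at not_clique
    obtain ⟨u, hu, v, hv, huv⟩ := not_clique
    exact mem_biUnion.2 ⟨(u, v), by simpa [L] using huv,
      mem_edgesContaining.2 ⟨heG, insert_subset hu (singleton_subset_iff.2 hv)⟩⟩
  have light (p : V × V) (hp : p ∈ L) :
      #(edgesContaining G {p.1, p.2}) * (Fintype.card V : ℝ) ^ 2 ≤ γ * Fintype.card V ^ r := by
    obtain ⟨ne, not_adj⟩ := (mem_filter.1 hp).2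
    exact (not_le.1 fun h => not_adj ⟨ne, h⟩).le
  have card_L_le : (#L : ℝ) ≤ Fintype.card V ^ 2 := by
    exact_mod_cast (card_le_univ L).trans_eq (by rw [Fintype.card_prod, sq])
  refine le_of_mul_le_mul_right ?_ (by positivity : 0 < (Fintype.card V : ℝ) ^ 2)
  calc #(nonCliqueEdges G (heavyGraph r G γ)) * (Fintype.card V : ℝ) ^ 2
      ≤ ∑ p ∈ L, #(edgesContaining G {p.1, p.2}) * (Fintype.card V : ℝ) ^ 2 := by
        rw [← sum_mul]
        gcongr
        exact_mod_cast (card_le_card subset).trans card_biUnion_le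
    _ ≤ #L * (γ * Fintype.card V ^ r) := by
        rw [← nsmul_eq_mul]
        exact sum_le_card_nsmul _ _ _ light
    _ ≤ Fintype.card V ^ 2 * (γ * Fintype.card V ^ r) := by gcongr
    _ = γ * Fintype.card V ^ r * Fintype.card V ^ 2 := mul_comm _ _

lemma card_filter_image_eq {e : Finset V} (he : #e = r) :
    #{x : Fin r → V | univ.image x = e} = r.factorial := by
  have card_equiv : Fintype.card (Fin r ≃ e) = r.factorial := by
    rw [Fintype.card_equiv (e.equivFinOfCardEq he).symm, Fintype.card_fin]
  rw [← card_equiv, ← card_univ]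
  symm
  refine card_nbij (fun g i => (g i : V)) (fun g _ => ?_) (fun g _ g' _ h => ?_) fun x hx => ?_
  · refine mem_coe.2 ((mem_filter_univ _).2 (Finset.ext fun v => ?_))
    refine ⟨fun hv => ?_, fun hv => mem_image.2 ⟨g.symm ⟨v, hv⟩, mem_univ _, by simp⟩⟩
    obtain ⟨i, -, rfl⟩ := mem_image.1 hv
    exact (g i).2
  · exact Equiv.ext fun i => Subtype.ext (congrFun h i)
  · have image_eq : univ.image x = e := by simpa using hx
    have mem (i : Fin r) : x i ∈ e := image_eq ▸ mem_image_of_mem x (mem_univ i)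
    have surj : Function.Surjective fun i => (⟨x i, mem i⟩ : e) := by
      rintro ⟨v, hv⟩
      obtain ⟨i, -, rfl⟩ := mem_image.1 (image_eq.symm ▸ hv)
      exact ⟨i, rfl⟩
    exact ⟨.ofBijective _ ((Fintype.bijective_iff_surjective_and_card _).2 ⟨surj, by simp [he]⟩),
      mem_coe.2 (mem_univ _), rfl⟩

lemma card_filter_image_mem (hG : IsRGraph r G) :
    #{x : Fin r → V | univ.image x ∈ G} = #G * r.factorial := by
  rw [card_eq_sum_card_fiberwise (f := fun x => univ.image x) (t := G)
    fun x hx => by simpa using hx]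
  refine sum_const_nat fun e he => ?_
  rw [← card_filter_image_eq (hG e he), filter_filter]
  congr 1
  ext x
  simpa using fun h : univ.image x = e => h ▸ he

end RGraph

section NonTransversalEdges

variable {V : Type*} [Fintype V] {r : ℕ} {G : Finset (Finset V)}

lemma card_mul_factorial_le_card_cliqueTuples_add (hG : IsRGraph r G) (P : SimpleGraph V) :
    #G * r.factorial ≤ #(cliqueTuples P r) + #(nonCliqueEdges G P) * r.factorial := by
  classical
  have nonClique_subset : nonCliqueEdges G P ⊆ G := fun e he => (mem_nonCliqueEdges.1 he).1
  have isRGraph_sdiff : IsRGraph r (G \ nonCliqueEdges G P) := fun e he => hG e (mem_sdiff.1 he).1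
  have subset : ({x | univ.image x ∈ G \ nonCliqueEdges G P} : Finset (Fin r → V)) ⊆
      cliqueTuples P r := fun x hx => by
    rw [mem_filter_univ, mem_sdiff] at hx
    obtain ⟨image_mem, not_nonClique⟩ := hx
    have image_clique : P.IsClique (univ.image x : Finset V) :=
      of_not_not fun h => not_nonClique (mem_nonCliqueEdges.2 ⟨image_mem, h⟩)
    have x_inj : Set.InjOn x (univ : Finset (Fin r)) :=
      injOn_of_card_image_eq (by rw [hG _ image_mem, card_univ, Fintype.card_fin])
    exact mem_cliqueTuples.2 fun i j hij => image_clique (by simp) (by simp)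
      fun h => hij (x_inj (by simp) (by simp) h)
  have card_le := card_le_card subset
  rw [card_filter_image_mem isRGraph_sdiff, card_sdiff_of_subset nonClique_subset, Nat.sub_mul]
    at card_le
  exact Nat.sub_le_iff_le_add.1 card_le

lemma card_nonTransversalEdges_mul_sq_le {ι : Type*} [DecidableEq ι] (hG : IsRGraph r G)
    (P : SimpleGraph V) (c : V → ι) :
    #(nonTransversalEdges G c) * Fintype.card V ^ 2 ≤
      #(nonCliqueEdges G P) * Fintype.card V ^ 2 +
        #(monochromaticPairs P c) * Fintype.card V ^ r := by
  classical
  have subset : nonTransversalEdges G c ⊆ nonCliqueEdges G P ∪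
      (monochromaticPairs P c).biUnion fun p => edgesContaining G {p.1, p.2} := by
    intro e he
    obtain ⟨heG, not_inj⟩ := mem_nonTransversalEdges.1 he
    simp only [Set.InjOn, mem_coe, not_forall] at not_inj
    obtain ⟨u, hu, v, hv, huv, ne⟩ := not_inj
    by_cases clique : P.IsClique e
    · exact mem_union_right _ (mem_biUnion.2 ⟨(u, v),
        mem_filter.2 ⟨mem_univ _, clique hu hv ne, huv⟩,
        mem_edgesContaining.2 ⟨heG, insert_subset hu (singleton_subset_iff.2 hv)⟩⟩)
    · exact mem_union_left _ (mem_nonCliqueEdges.2 ⟨heG, clique⟩)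
  have card_pair_eq (p : V × V) (hp : p ∈ monochromaticPairs P c) :
      #({p.1, p.2} : Finset V) = 2 :=
    card_pair (mem_filter.1 hp).2.1.ne
  calc #(nonTransversalEdges G c) * Fintype.card V ^ 2
      ≤ (#(nonCliqueEdges G P) +
          #((monochromaticPairs P c).biUnion fun p => edgesContaining G {p.1, p.2})) *
          Fintype.card V ^ 2 :=
        Nat.mul_le_mul_right _ ((card_le_card subset).trans (card_union_le _ _))
    _ ≤ #(nonCliqueEdges G P) * Fintype.card V ^ 2 +
          #(monochromaticPairs P c) * Fintype.card V ^ r := by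
        rw [add_mul]
        gcongr 1
        exact card_biUnion_edgesContaining_mul_le hG _ card_pair_eq

lemma card_nonTransversalEdges_mul_le {ι : Type*} [DecidableEq ι] (hG : IsRGraph r G)
    (c c' : V → ι) :
    #(nonTransversalEdges G c') * Fintype.card V ≤
      #(nonTransversalEdges G c) * Fintype.card V + #{v | c' v ≠ c v} * Fintype.card V ^ r := by
  classical
  have subset : nonTransversalEdges G c' ⊆ nonTransversalEdges G c ∪
      ({v | c' v ≠ c v} : Finset V).biUnion fun v => edgesContaining G {v} := by
    intro e he
    obtain ⟨heG, not_inj⟩ := mem_nonTransversalEdges.1 he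
    by_cases agree : ∀ v ∈ e, c' v = c v
    · exact mem_union_left _ (mem_nonTransversalEdges.2
        ⟨heG, fun inj => not_inj (inj.congr fun v hv => (agree v hv).symm)⟩)
    · push Not at agree
      obtain ⟨v, hv, ne⟩ := agree
      exact mem_union_right _ (mem_biUnion.2
        ⟨v, by simpa using ne, mem_edgesContaining.2 ⟨heG, singleton_subset_iff.2 hv⟩⟩)
  calc #(nonTransversalEdges G c') * Fintype.card V
      ≤ (#(nonTransversalEdges G c) +
          #(({v | c' v ≠ c v} : Finset V).biUnion fun v => edgesContaining G {v})) *
          Fintype.card V :=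
        Nat.mul_le_mul_right _ ((card_le_card subset).trans (card_union_le _ _))
    _ ≤ _ := by
        rw [add_mul]
        gcongr 1
        simpa using card_biUnion_edgesContaining_mul_le hG _ fun v _ => card_singleton v

end NonTransversalEdges

section Embedding

lemma exists_isContained_of_le_card_cliqueTuples {α : Type*} [Finite α] {F : SimpleGraph α}
    {l : ℕ} (hF : F.Colorable l) {δ : ℝ} (hδ : 0 < δ) :
    ∃ n₀ : ℕ, ∀ (V : Type*) [Fintype V] (P : SimpleGraph V), n₀ ≤ Fintype.card V →
      δ * Fintype.card V ^ l ≤ #(cliqueTuples P l) → F.IsContained P := by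
  obtain ⟨n₀, exists_box⟩ := exists_box_subset α l hδ
  obtain ⟨col⟩ := hF
  refine ⟨n₀, fun V _ P hV hP => ?_⟩
  obtain ⟨y, y_inj, y_mem⟩ := exists_box V _ hV hP
  have adj {u v : α} (huv : col u ≠ col v) : P.Adj (y (col u) u) (y (col v) v) := by
    simpa [huv.symm] using
      mem_cliqueTuples.1 (y_mem fun i => if i = col u then u else v) huv
  refine ⟨⟨fun u => y (col u) u, fun huv => adj (col.valid huv)⟩,
    fun u v (h : y (col u) u = y (col v) v) => ?_⟩
  by_cases huv : col u = col v
  · exact y_inj (col u) (h.trans (by rw [huv]))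
  · exact absurd h (adj huv).ne

lemma exists_pairwiseDisjoint_choice {ι V : Type*} [Fintype ι] {d : ℕ}
    (Z : ι → Set (Finset V)) (M₀ : Finset V) (card_le : ∀ i, ∀ s ∈ Z i, #s ≤ d)
    (avoid : ∀ i, ∀ M : Finset V, #M ≤ #M₀ + Fintype.card ι * d → ∃ s ∈ Z i, Disjoint s M) :
    ∃ s : ι → Finset V, (∀ i, s i ∈ Z i ∧ Disjoint (s i) M₀) ∧
      Pairwise fun i j => Disjoint (s i) (s j) := by
  classical
  suffices partial_choice : ∀ E : Finset ι, ∃ s : ι → Finset V,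
      (∀ i, s i ∈ Z i ∧ Disjoint (s i) M₀) ∧ (E : Set ι).PairwiseDisjoint s by
    obtain ⟨s, s_mem, s_disj⟩ := partial_choice univ
    exact ⟨s, s_mem, fun i j => s_disj (by simp) (by simp)⟩
  intro E
  induction E using Finset.induction_on with
  | empty =>
    choose s hs using fun i => avoid i M₀ (Nat.le_add_right _ _)
    exact ⟨s, hs, by simp⟩
  | insert a E ha ih =>
    obtain ⟨s, s_mem, s_disj⟩ := ih
    have card_used_le : #(M₀ ∪ E.biUnion s) ≤ #M₀ + Fintype.card ι * d :=
      (card_union_le _ _).trans (Nat.add_le_add_left ((card_biUnion_le_card_mul _ _ _ fun i _ =>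
        card_le i _ (s_mem i).1).trans (Nat.mul_le_mul_right _ (card_le_univ E))) _)
    obtain ⟨t, ht, disj⟩ := avoid a _ card_used_le
    rw [disjoint_union_right, disjoint_biUnion_right] at disj
    have update_of_mem {i : ι} (hi : i ∈ E) : Function.update s a t i = s i :=
      Function.update_of_ne (ne_of_mem_of_not_mem hi ha) _ _
    refine ⟨Function.update s a t, fun i => ?_, ?_⟩
    · rcases eq_or_ne i a with rfl | hi
      · simpa using ⟨ht, disj.1⟩
      · simpa [hi] using s_mem i
    · rw [coe_insert, Set.pairwiseDisjoint_insert]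
      refine ⟨fun i hi j hj hij => ?_, fun j hj _ => ?_⟩
      · simpa only [Function.onFun, update_of_mem hi, update_of_mem hj] using s_disj hi hj hij
      · simpa only [Function.update_self, update_of_mem hj] using disj.2 j hj

variable {V : Type*} [DecidableEq V] {r : ℕ} {G : Finset (Finset V)}

lemma sym2ToFinset_mk {α : Type*} [Fintype α] [DecidableEq α] (u v : α) :
    sym2ToFinset s(u, v) = {u, v} := by
  ext
  simp [sym2ToFinset]

lemma containsCopy_expansion_of_disjoint {α : Type*} [Fintype α] [DecidableEq α]
    {F : SimpleGraph α} [DecidableRel F.Adj] {f : α → V} (hf : f.Injective)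
    {s : F.edgeFinset → Finset V} (s_card : ∀ e, #(s e) = r - 2)
    (s_disj_image : ∀ e, Disjoint (s e) (univ.image f))
    (s_disj : Pairwise fun e e' => Disjoint (s e) (s e'))
    (union_mem : ∀ e, (sym2ToFinset e.1).image f ∪ s e ∈ G) :
    ContainsCopy (expansion r F) G := by
  let g (e : F.edgeFinset) : Fin (r - 2) ≃ s e := ((s e).equivFinOfCardEq (s_card e)).symm
  have image_g (e : F.edgeFinset) : univ.image (fun i => (g e i : V)) = s e := by
    ext v
    refine ⟨fun hv => ?_, fun hv => mem_image.2 ⟨(g e).symm ⟨v, hv⟩, mem_univ _, by simp⟩⟩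
    obtain ⟨i, -, rfl⟩ := mem_image.1 hv
    exact (g e i).2
  refine ⟨Sum.elim f fun p => g p.1 p.2, hf.sumElim ?_ fun u p h => ?_, ?_⟩
  · rintro ⟨e, i⟩ ⟨e', j⟩ (h : (g e i : V) = g e' j)
    obtain rfl : e = e' := of_not_not fun ne =>
      disjoint_left.1 (s_disj ne) (g e i).2 (h ▸ (g e' j).2)
    exact congrArg _ ((g e).injective (Subtype.ext h))
  · exact disjoint_left.1 (s_disj_image p.1) (g p.1 p.2).2 (h ▸ mem_image_of_mem f (mem_univ u))
  · intro E hE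
    obtain ⟨e, -, rfl⟩ := mem_image.1 hE
    rw [image_union, image_image, image_image]
    exact (image_g e).symm ▸ union_mem e

variable [Fintype V] {γ : ℝ}

lemma exists_disjoint_sdiff_of_heavy (hG : IsRGraph r G) {U M : Finset V}
    (hU : γ * Fintype.card V ^ r ≤ #(edgesContaining G U) * (Fintype.card V : ℝ) ^ #U)
    (hM : #M < γ * Fintype.card V) : ∃ e ∈ G, U ⊆ e ∧ Disjoint (e \ U) M := by
  by_contra! meets
  have subset : edgesContaining G U ⊆ (M \ U).biUnion fun v => edgesContaining G (insert v U) := by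
    intro e he
    obtain ⟨heG, hUe⟩ := mem_edgesContaining.1 he
    obtain ⟨v, hve, hvM⟩ := not_disjoint_iff.1 (meets e heG hUe)
    rw [mem_sdiff] at hve
    exact mem_biUnion.2 ⟨v, mem_sdiff.2 ⟨hvM, hve.2⟩,
      mem_edgesContaining.2 ⟨heG, insert_subset hve.1 hUe⟩⟩
  have card_le : #(edgesContaining G U) * Fintype.card V ^ (#U + 1) ≤ #M * Fintype.card V ^ r :=
    calc #(edgesContaining G U) * Fintype.card V ^ (#U + 1)
        ≤ #((M \ U).biUnion fun v => edgesContaining G (insert v U)) *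
            Fintype.card V ^ (#U + 1) := Nat.mul_le_mul_right _ (card_le_card subset)
      _ ≤ #(M \ U) * Fintype.card V ^ r := card_biUnion_edgesContaining_mul_le hG _
          fun v hv => card_insert_of_notMem (mem_sdiff.1 hv).2
      _ ≤ #M * Fintype.card V ^ r := Nat.mul_le_mul_right _ (card_le_card sdiff_subset)
  have card_pos : 0 < (Fintype.card V : ℝ) := by
    refine (Nat.cast_nonneg _).lt_of_ne fun h => (Nat.cast_nonneg (α := ℝ) #M).not_gt ?_
    rwa [← h, mul_zero] at hM
  have : γ * Fintype.card V ^ r * Fintype.card V < γ * Fintype.card V ^ r * Fintype.card V :=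
    calc γ * Fintype.card V ^ r * Fintype.card V
        ≤ #(edgesContaining G U) * (Fintype.card V : ℝ) ^ #U * Fintype.card V := by gcongr
      _ = #(edgesContaining G U) * (Fintype.card V : ℝ) ^ (#U + 1) := by rw [pow_succ, mul_assoc]
      _ ≤ #M * (Fintype.card V : ℝ) ^ r := by exact_mod_cast card_le
      _ < γ * Fintype.card V * (Fintype.card V : ℝ) ^ r := by gcongr
      _ = γ * Fintype.card V ^ r * Fintype.card V := mul_right_comm _ _ _
  exact this.false

theorem containsCopy_expansion_of_isContained_heavyGraph {α : Type*} [Fintype α] [DecidableEq α]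
    {F : SimpleGraph α} [DecidableRel F.Adj] (hG : IsRGraph r G)
    (hn : ((Fintype.card α + #F.edgeFinset * (r - 2) : ℕ) : ℝ) < γ * Fintype.card V)
    (hF : F.IsContained (heavyGraph r G γ)) : ContainsCopy (expansion r F) G := by
  obtain ⟨f, f_inj⟩ := hF
  let U (e : F.edgeFinset) : Finset V := (sym2ToFinset e.1).image f
  have card_U_and_heavy (e : F.edgeFinset) : #(U e) = 2 ∧
      γ * Fintype.card V ^ r ≤ #(edgesContaining G (U e)) * (Fintype.card V : ℝ) ^ 2 := by
    obtain ⟨e, he⟩ := e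
    induction e using Sym2.ind with
    | _ u v =>
      obtain ⟨ne, heavy⟩ := f.map_rel (SimpleGraph.mem_edgeFinset.1 he)
      simp only [U, sym2ToFinset_mk, image_insert, image_singleton]
      exact ⟨card_pair ne, heavy⟩
  obtain ⟨s, s_mem, s_disj⟩ := exists_pairwiseDisjoint_choice (d := r - 2)
    (fun e => {s | #s = r - 2 ∧ U e ∪ s ∈ G}) (univ.image f) (fun e s hs => hs.1.le)
    fun e M hM => by
      have card_M_lt : #M < γ * Fintype.card V := by
        rw [card_image_of_injective _ f_inj, card_univ, Fintype.card_coe] at hM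
        exact hn.trans_le' (Nat.cast_le.2 hM)
      obtain ⟨e', he', hU, disj⟩ := exists_disjoint_sdiff_of_heavy (U := U e) hG
        (by rw [(card_U_and_heavy e).1]; exact (card_U_and_heavy e).2) card_M_lt
      refine ⟨e' \ U e, ⟨?_, ?_⟩, disj⟩
      · rw [card_sdiff_of_subset hU, hG e' he', (card_U_and_heavy e).1]
      · rwa [union_sdiff_of_subset hU]
  exact containsCopy_expansion_of_disjoint f_inj (fun e => (s_mem e).1.1) (fun e => (s_mem e).2)
    s_disj fun e => (s_mem e).1.2

end Embedding

section TuranGraph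

theorem exists_perm_card_ne_le {V ι : Type*} [Fintype V] [Fintype ι] [DecidableEq ι]
    (c c' : V → ι) :
    ∃ σ : Equiv.Perm V, #{v | c' (σ v) ≠ c v} ≤ ∑ i, (#{v | c v = i} - #{v | c' v = i}) := by
  classical
  choose S S_subset card_S using fun i =>
    exists_subset_card_eq (s := ({v | c v = i} : Finset V)) (min_le_left _ (#{v | c' v = i}))
  obtain ⟨f⟩ : Nonempty (∀ i, S i ↪ ({v | c' v = i} : Finset V)) :=
    Classical.nonempty_pi.2 fun i => Function.Embedding.nonempty_of_card_le (by
      simpa only [Fintype.card_coe, card_S] using min_le_right _ _)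
  have c'_f (i : ι) (v : S i) : c' (f i v) = i := (mem_filter.1 (f i v).2).2
  have eq_of_f_eq {i j : ι} {v : S i} {w : S j} (h : (f i v : V) = f j w) : (v : V) = w := by
    obtain rfl : i = j := by rw [← c'_f i v, h, c'_f]
    exact congrArg Subtype.val ((f i).injective (Subtype.ext h))
  let g : {v // v ∈ S (c v)} ↪ V :=
    ⟨fun v => f (c v) ⟨v, v.2⟩, fun _ _ h => Subtype.ext (eq_of_f_eq h)⟩
  refine ⟨g.toEquivRange.extendSubtype, ?_⟩
  calc _ ≤ #(univ.biUnion fun i => ({v | c v = i} : Finset V) \ S i) := card_le_card fun v hv => by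
        refine mem_biUnion.2 ⟨c v, mem_univ _, mem_sdiff.2 ⟨by simp, fun hvS => ?_⟩⟩
        refine (mem_filter.1 hv).2 ?_
        exact (congrArg c' (g.toEquivRange.extendSubtype_apply_of_mem v hvS)).trans (c'_f _ _)
    _ ≤ ∑ i, #(({v | c v = i} : Finset V) \ S i) := card_biUnion_le
    _ = _ := sum_congr rfl fun i _ => by
        rw [card_sdiff_of_subset (S_subset i), card_S, tsub_min]

lemma descFactorial_mul_pow_le_card_injective_comp {V ι : Type*} [Fintype V] [Fintype ι]
    [DecidableEq ι] {c : V → ι} {m : ℕ} (hc : ∀ i, m ≤ #{v | c v = i}) (r : ℕ) :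
    (Fintype.card ι).descFactorial r * m ^ r ≤ #{x : Fin r → V | (c ∘ x).Injective} := by
  have pow_le_card (f : Fin r → ι) : m ^ r ≤ #{x : Fin r → V | c ∘ x = f} := by
    calc m ^ r = ∏ _i : Fin r, m := by simp
      _ ≤ ∏ i, #{v | c v = f i} := prod_le_prod' fun i _ => hc (f i)
      _ = #(Fintype.piFinset fun i => ({v | c v = f i} : Finset V)) :=
          (Fintype.card_piFinset _).symm
      _ = #{x : Fin r → V | c ∘ x = f} := congrArg card (by ext x; simp [funext_iff])
  calc (Fintype.card ι).descFactorial r * m ^ r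
      = ∑ f : Fin r → ι with f.Injective, m ^ r := by
        rw [sum_const, card_filter_injective, Fintype.card_fin, smul_eq_mul]
    _ ≤ ∑ f : Fin r → ι with f.Injective, #{x : Fin r → V | c ∘ x = f} :=
        sum_le_sum fun f _ => pow_le_card f
    _ = #{x : Fin r → V | (c ∘ x).Injective} := by
        rw [card_eq_sum_card_fiberwise (f := (c ∘ ·))
          (t := ({f | f.Injective} : Finset (Fin r → ι))) fun x hx => by simpa using hx]
        refine sum_congr rfl fun f hf => congrArg card ?_
        ext x
        simp only [mem_filter, mem_univ, true_and] at hf ⊢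
        exact ⟨fun h => ⟨h ▸ hf, h⟩, And.right⟩

/-- The colouring of `Fin n` by residues modulo `k`, whose colour classes are the parts of
`turanGraph r n k`. -/
def residueColoring (n k : ℕ) [NeZero k] (x : Fin n) : Fin k := Fin.ofNat k x

variable {r n k : ℕ} [NeZero k]

lemma div_le_card_residueColoring (n : ℕ) (i : Fin k) :
    n / k ≤ #{x | residueColoring n k x = i} := by
  calc n / k ≤ n.count (· ≡ i [MOD k]) := by
        rw [Nat.count_modEq_card _ (Nat.pos_of_neZero k)]
        exact Nat.le_add_right _ _
    _ = #{x | residueColoring n k x = i} := by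
        rw [Nat.count_eq_card_filter_range, ← Nat.Iio_eq_range, ← Fin.map_valEmbedding_univ,
          filter_map, card_map]
        refine congrArg card (filter_congr fun x _ => ?_)
        simp [residueColoring, Fin.ext_iff, Nat.ModEq, Nat.mod_eq_of_lt i.2]

lemma mem_turanGraph {e : Finset (Fin n)} :
    e ∈ turanGraph r n k ↔ #e = r ∧ Set.InjOn (residueColoring n k) e := by
  simp [turanGraph, residueColoring, Set.InjOn, Fin.ext_iff]

lemma isRGraph_turanGraph : IsRGraph r (turanGraph r n k) := fun _ he => (mem_turanGraph.1 he).1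

lemma descFactorial_mul_div_pow_le_turanNum_mul_factorial :
    k.descFactorial r * (n / k) ^ r ≤ turanNum r n k * r.factorial := by
  calc k.descFactorial r * (n / k) ^ r
      ≤ #{x : Fin r → Fin n | (residueColoring n k ∘ x).Injective} := by
        simpa using descFactorial_mul_pow_le_card_injective_comp
          (div_le_card_residueColoring (k := k) n) r
    _ ≤ #{x : Fin r → Fin n | univ.image x ∈ turanGraph r n k} :=
        card_le_card (monotone_filter_right _ fun x _ hx => mem_turanGraph.2
          ⟨by rw [card_image_of_injective _ hx.of_comp, card_univ, Fintype.card_fin],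
            by simpa using hx.injOn_range⟩)
    _ = turanNum r n k * r.factorial := card_filter_image_mem isRGraph_turanGraph

lemma eventually_le_turanNum (r k : ℕ) [NeZero k] {δ : ℝ} (hδ : 0 < δ) :
    ∀ᶠ n : ℕ in Filter.atTop,
      (turanCliqueDensity k r - δ) * (n : ℝ) ^ r ≤ turanNum r n k * r.factorial := by
  have tendsto_div : Filter.Tendsto (fun n : ℕ => ((n / k : ℕ) / n : ℝ)) Filter.atTop
      (nhds (k : ℝ)⁻¹) := by
    refine ((tendsto_nat_floor_mul_div_atTop (inv_nonneg.2 (Nat.cast_nonneg k))).comp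
      tendsto_natCast_atTop_atTop).congr fun n => ?_
    rw [Function.comp_apply, inv_mul_eq_div, Nat.floor_div_eq_div]
  have tendsto_density : Filter.Tendsto
      (fun n : ℕ => k.descFactorial r * ((n / k : ℕ) / n : ℝ) ^ r) Filter.atTop
      (nhds (turanCliqueDensity k r)) := by
    rw [turanCliqueDensity, div_eq_mul_inv, ← inv_pow]
    exact (tendsto_div.pow r).const_mul _
  filter_upwards [tendsto_density.eventually_const_lt (sub_lt_self _ hδ),
    Filter.eventually_gt_atTop 0] with n hn n_pos
  have n_pos : (0 : ℝ) < n := Nat.cast_pos.2 n_pos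
  calc (turanCliqueDensity k r - δ) * (n : ℝ) ^ r
      ≤ k.descFactorial r * ((n / k : ℕ) / n : ℝ) ^ r * (n : ℝ) ^ r := by gcongr
    _ = k.descFactorial r * ((n / k : ℕ) : ℝ) ^ r := by
        rw [mul_assoc, ← mul_pow, div_mul_cancel₀ _ n_pos.ne']
    _ ≤ turanNum r n k * r.factorial := by
        exact_mod_cast descFactorial_mul_div_pow_le_turanNum_mul_factorial

lemma eventually_le_of_turanNum_sub_le (r k : ℕ) [NeZero k] {δ η : ℝ} (hδ : 0 < δ)
    (hη : η ≤ δ / 2) : ∀ᶠ n : ℕ in Filter.atTop, ∀ m : ℝ, turanNum r n k - η * n.choose r ≤ m →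
      (turanCliqueDensity k r - δ) * n ^ r ≤ m * r.factorial := by
  filter_upwards [eventually_le_turanNum r k (half_pos hδ)] with n le_turanNum m hm
  have factorial_mul_choose_le : (r.factorial * n.choose r : ℝ) ≤ n ^ r := by
    exact_mod_cast n.descFactorial_eq_factorial_mul_choose r ▸ n.descFactorial_le_pow r
  have loss_le : η * (r.factorial * n.choose r) ≤ δ / 2 * n ^ r := by gcongr
  linear_combination le_turanNum + (r.factorial : ℝ) * hm + loss_le

lemma card_symmDiff_turanGraph_add_card_le {G : Finset (Finset (Fin n))} (hG : IsRGraph r G)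
    (σ : Equiv.Perm (Fin n)) :
    #((G.image fun e => e.image σ) \ turanGraph r n k ∪
        turanGraph r n k \ G.image fun e => e.image σ) + #G ≤
      2 * #(nonTransversalEdges G (residueColoring n k ∘ σ)) + turanNum r n k := by
  set H := G.image fun e => e.image σ
  set T := turanGraph r n k
  have card_H : #H = #G := card_image_of_injective _ (image_injective σ.injective)
  have card_sdiff_le : #(H \ T) ≤ #(nonTransversalEdges G (residueColoring n k ∘ σ)) := by
    refine (card_le_card fun e he => ?_).trans (card_image_le (f := fun e => e.image σ))
    obtain ⟨heH, heT⟩ := mem_sdiff.1 he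
    obtain ⟨e, heG, rfl⟩ := mem_image.1 heH
    refine mem_image_of_mem _ (mem_nonTransversalEdges.2 ⟨heG, fun inj => heT ?_⟩)
    refine mem_turanGraph.2 ⟨by rw [card_image_of_injective _ σ.injective, hG e heG], ?_⟩
    rw [coe_image]
    exact inj.image_of_comp
  have card_T : #T = turanNum r n k := rfl
  have := card_union_le (H \ T) (T \ H)
  have := card_sdiff_add_card_inter H T
  have := card_sdiff_add_card_inter T H
  rw [inter_comm] at this
  lia

end TuranGraph

section Stability

lemma card_mul_factorial_le_cliqueDensity_heavyGraph {V : Type*} [Fintype V] [DecidableEq V]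
    [Nonempty V] {r : ℕ} {G : Finset (Finset V)} {γ : ℝ} (hG : IsRGraph r G) (hγ : 0 ≤ γ) :
    (#G * r.factorial : ℝ) ≤
      (cliqueDensity (heavyGraph r G γ) r + γ * r.factorial) * Fintype.card V ^ r := by
  have pow_pos : 0 < (Fintype.card V : ℝ) ^ r := by positivity
  calc (#G * r.factorial : ℝ)
      ≤ #(cliqueTuples (heavyGraph r G γ) r) +
          #(nonCliqueEdges G (heavyGraph r G γ)) * r.factorial := by
        exact_mod_cast card_mul_factorial_le_card_cliqueTuples_add hG _
    _ ≤ #(cliqueTuples (heavyGraph r G γ) r) + γ * Fintype.card V ^ r * r.factorial := by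
        gcongr
        exact card_nonCliqueEdges_heavyGraph_le hγ
    _ = (cliqueDensity (heavyGraph r G γ) r + γ * r.factorial) * Fintype.card V ^ r := by
        rw [cliqueDensity, add_mul, div_mul_cancel₀ _ pow_pos.ne']
        ring

variable {α : Type*} [Fintype α] [DecidableEq α] {F : SimpleGraph α} [DecidableRel F.Adj]
  {k r : ℕ}

lemma exists_cliqueDensity_heavyGraph_le (hF : F.Colorable k) {δ γ : ℝ} (hδ : 0 < δ)
    (hγ : 0 < γ) : ∃ n₀ : ℕ, ∀ (V : Type*) [Fintype V] [DecidableEq V] (G : Finset (Finset V)),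
      n₀ < Fintype.card V → IsRGraph r G → ¬ ContainsCopy (expansion r F) G →
        cliqueDensity (heavyGraph r G γ) k ≤ δ := by
  obtain ⟨n₁, isContained⟩ := exists_isContained_of_le_card_cliqueTuples hF hδ
  obtain ⟨n₂, hn₂⟩ := exists_nat_gt
    (((Fintype.card α + #F.edgeFinset * (r - 2) : ℕ) : ℝ) / γ)
  refine ⟨max n₁ n₂, fun V _ _ G hV hG hfree => ?_⟩
  obtain ⟨hV₁, hV₂⟩ := max_lt_iff.1 hV
  have card_pos : (0 : ℝ) < Fintype.card V := Nat.cast_pos.2 (Nat.zero_lt_of_lt hV)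
  refine (div_le_iff₀ (by positivity)).2 (le_of_not_ge fun many_cliques => hfree ?_)
  refine containsCopy_expansion_of_isContained_heavyGraph hG ?_
    (isContained V _ hV₁.le many_cliques)
  rw [← div_lt_iff₀' hγ]
  exact hn₂.trans (Nat.cast_lt.2 hV₂)

theorem exists_balanced_coloring_of_expansion_free (hr : 2 ≤ r) (hrk : r ≤ k)
    (hF : F.Colorable (k + 1)) {θ : ℝ} (hθ : 0 < θ) :
    ∃ η > 0, ∃ n₀ : ℕ, ∀ (V : Type*) [Fintype V] [DecidableEq V] (G : Finset (Finset V)),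
      n₀ < Fintype.card V → IsRGraph r G → ¬ ContainsCopy (expansion r F) G →
      (turanCliqueDensity k r - η) * Fintype.card V ^ r ≤ #G * r.factorial →
        ∃ c : V → Fin k, #(nonTransversalEdges G c) ≤ θ * Fintype.card V ^ r ∧
          ∀ i, |(#{v | c v = i} - Fintype.card V / k : ℝ)| ≤ θ * Fintype.card V := by
  obtain ⟨δ, hδ, exists_coloring⟩ := exists_balanced_coloring hr hrk (half_pos hθ)
  let γ : ℝ := min (θ / 2) (δ / 2 / r.factorial)
  have hγ : 0 < γ := by positivity
  obtain ⟨n₀, few_cliques⟩ := exists_cliqueDensity_heavyGraph_le (r := r) hF hδ hγ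
  refine ⟨δ / 2, half_pos hδ, n₀, fun V _ _ G hV hG hfree many_edges => ?_⟩
  have := Fintype.card_pos_iff.1 (Nat.zero_lt_of_lt hV)
  have many_cliques : turanCliqueDensity k r - δ ≤ cliqueDensity (heavyGraph r G γ) r := by
    have hγδ : γ * r.factorial ≤ δ / 2 := (le_div_iff₀ (by positivity)).1 (min_le_right _ _)
    have := le_of_mul_le_mul_right
      (many_edges.trans (card_mul_factorial_le_cliqueDensity_heavyGraph hG hγ.le))
      (by positivity)
    linarith
  obtain ⟨c, few_monochromatic, balanced⟩ :=
    exists_coloring V _ (few_cliques V G hV hG hfree) many_cliques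
  refine ⟨c, le_of_mul_le_mul_right (a := (Fintype.card V : ℝ) ^ 2) ?_ (by positivity),
    fun i => (balanced i).trans (by gcongr; linarith)⟩
  calc (#(nonTransversalEdges G c) * Fintype.card V ^ 2 : ℝ)
      ≤ #(nonCliqueEdges G (heavyGraph r G γ)) * Fintype.card V ^ 2 +
          #(monochromaticPairs (heavyGraph r G γ) c) * Fintype.card V ^ r := by
        exact_mod_cast card_nonTransversalEdges_mul_sq_le hG _ c
    _ ≤ θ / 2 * Fintype.card V ^ r * Fintype.card V ^ 2 +
          θ / 2 * Fintype.card V ^ 2 * Fintype.card V ^ r := by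
        gcongr
        exact (card_nonCliqueEdges_heavyGraph_le hγ.le).trans (by gcongr; exact min_le_left _ _)
    _ = θ * Fintype.card V ^ r * Fintype.card V ^ 2 := by ring

variable {n : ℕ} {G : Finset (Finset (Fin n))} {θ : ℝ}

lemma exists_perm_card_residueColoring_ne_le [NeZero k] {c : Fin n → Fin k}
    (balanced : ∀ i, (#{x | c x = i} : ℝ) ≤ n / k + θ * n) (hn : 1 ≤ θ * n) :
    ∃ σ : Equiv.Perm (Fin n), (#{x | residueColoring n k (σ x) ≠ c x} : ℝ) ≤ 2 * k * θ * n := by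
  obtain ⟨σ, hσ⟩ := exists_perm_card_ne_le c (residueColoring n k)
  have excess_le (i : Fin k) :
      ((#{x | c x = i} - #{x | residueColoring n k x = i} : ℕ) : ℝ) ≤ 2 * θ * n := by
    have div_lt : (n : ℝ) / k < (n / k : ℕ) + 1 := by
      rw [← Nat.floor_div_eq_div (K := ℝ)]
      exact Nat.lt_floor_add_one _
    have class_ge : ((n / k : ℕ) : ℝ) ≤ #{x | residueColoring n k x = i} :=
      Nat.cast_le.2 (div_le_card_residueColoring n i)
    rcases le_total #{x | c x = i} #{x | residueColoring n k x = i} with h | h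
    · rw [Nat.sub_eq_zero_of_le h, Nat.cast_zero]
      linarith
    · rw [Nat.cast_sub h]
      linarith [balanced i]
  refine ⟨σ, ?_⟩
  calc (#{x | residueColoring n k (σ x) ≠ c x} : ℝ)
      ≤ ∑ i, ((#{x | c x = i} - #{x | residueColoring n k x = i} : ℕ) : ℝ) := by
        exact_mod_cast hσ
    _ ≤ ∑ _i : Fin k, 2 * θ * n := sum_le_sum fun i _ => excess_le i
    _ = 2 * k * θ * n := by
        rw [sum_const, card_univ, Fintype.card_fin, nsmul_eq_mul]
        ring

lemma exists_perm_card_nonTransversalEdges_le [NeZero k] (hG : IsRGraph r G) {c : Fin n → Fin k}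
    (few : #(nonTransversalEdges G c) ≤ θ * n ^ r)
    (balanced : ∀ i, (#{x | c x = i} : ℝ) ≤ n / k + θ * n) (hn : 1 ≤ θ * n) :
    ∃ σ : Equiv.Perm (Fin n),
      (#(nonTransversalEdges G (residueColoring n k ∘ σ)) : ℝ) ≤ (2 * k + 1) * θ * n ^ r := by
  obtain ⟨σ, hσ⟩ := exists_perm_card_residueColoring_ne_le balanced hn
  have n_pos : (0 : ℝ) < n := by
    refine (Nat.cast_nonneg n).lt_of_ne fun h => ?_
    rw [← h] at hn
    linarith
  refine ⟨σ, le_of_mul_le_mul_right ?_ n_pos⟩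
  calc (#(nonTransversalEdges G (residueColoring n k ∘ σ)) * n : ℝ)
      ≤ #(nonTransversalEdges G c) * n + #{x | residueColoring n k (σ x) ≠ c x} * n ^ r := by
        exact_mod_cast Fintype.card_fin n ▸
          card_nonTransversalEdges_mul_le hG c (residueColoring n k ∘ σ)
    _ ≤ θ * n ^ r * n + 2 * k * θ * n * n ^ r := by gcongr
    _ = (2 * k + 1) * θ * n ^ r * n := by ring

lemma epsClose_turanGraph_of_coloring [NeZero k] (hG : IsRGraph r G) {c : Fin n → Fin k}
    {ε η : ℝ} (few : #(nonTransversalEdges G c) ≤ θ * n ^ r)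
    (balanced : ∀ i, (#{x | c x = i} : ℝ) ≤ n / k + θ * n) (hn : 1 ≤ θ * n)
    (hG_card : turanNum r n k - η * n.choose r ≤ #G)
    (hε : 2 * (2 * k + 1) * θ * n ^ r + η * n.choose r ≤ ε * n.choose r) :
    EpsClose r n ε G (turanGraph r n k) := by
  obtain ⟨σ, hσ⟩ := exists_perm_card_nonTransversalEdges_le hG few balanced hn
  have card_le := card_symmDiff_turanGraph_add_card_le (k := k) hG σ
  rify at card_le
  exact ⟨σ, by linarith⟩

theorem stability_expansion_general {ℓ : ℕ} (hr : 2 ≤ r) (hrl : r < ℓ) (hF : F.Colorable ℓ)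
    {ε : ℝ} (hε : 0 < ε) : ∃ n₀ : ℕ, 0 < n₀ ∧ ∃ η : ℝ, 0 < η ∧
      ∀ n : ℕ, n₀ < n → ∀ G : Finset (Finset (Fin n)),
        IsRGraph r G → ¬ ContainsCopy (expansion r F) G →
        turanNum r n (ℓ - 1) - η * n.choose r ≤ #G →
        EpsClose r n ε G (turanGraph r n (ℓ - 1)) := by
  obtain ⟨k, rfl⟩ := Nat.exists_eq_add_one_of_ne_zero (Nat.ne_zero_of_lt hrl)
  have hrk : r ≤ k := Nat.lt_succ_iff.1 hrl
  have : NeZero k := ⟨by lia⟩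
  rw [Nat.add_sub_cancel]
  let θ : ℝ := ε / (8 * (2 * k + 1) * r.factorial)
  have hθ : 0 < θ := by positivity
  obtain ⟨δ, hδ, n₁, exists_coloring⟩ :=
    exists_balanced_coloring_of_expansion_free.{_, 0} hr hrk hF hθ
  obtain ⟨n₂, hn₂⟩ := ((eventually_le_of_turanNum_sub_le r k hδ (min_le_right (ε / 2) _)).and
    ((eventually_mul_pow_le_descFactorial r one_half_pos).and
      (tendsto_natCast_atTop_atTop.eventually_ge_atTop (1 / θ)))).exists_forall_of_atTop
  refine ⟨n₁ + n₂ + 1, by lia, min (ε / 2) (δ / 2), by positivity,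
    fun n hn G hG hfree hG_card => ?_⟩
  obtain ⟨le_of_turanNum, pow_le, le_n⟩ := hn₂ n (by lia)
  rw [Nat.descFactorial_eq_factorial_mul_choose, Nat.cast_mul] at pow_le
  obtain ⟨c, few, balanced⟩ := exists_coloring (Fin n) G (by simp; lia) hG hfree
    (by simpa using le_of_turanNum _ hG_card)
  simp only [Fintype.card_fin] at few balanced
  refine epsClose_turanGraph_of_coloring hG few
    (fun i => sub_le_iff_le_add'.1 (le_of_abs_le (balanced i))) ((div_le_iff₀' hθ).1 le_n)
    hG_card ?_
  calc 2 * (2 * k + 1) * θ * n ^ r + min (ε / 2) (δ / 2) * n.choose r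
      ≤ 2 * (2 * k + 1) * θ * (2 * (r.factorial * n.choose r)) + ε / 2 * n.choose r := by
        gcongr
        · linarith
        · exact min_le_left _ _
    _ = ε * n.choose r := by
        simp only [θ]
        field_simp
        ring

end Stability

/-- **Theorem (Stability of `H_F^(r)`).**  Fix `ℓ > r ≥ 2` and a 2-graph `F` with `χ(F) = ℓ`.
For every `ε > 0` there exist `n₀ > 0` and `η > 0` such that every `n`-vertex
`H_F^(r)`-free `r`-graph `G` with `n > n₀` and `|G| ≥ t_r(n, ℓ-1) - η·C(n,r)` is
`ε`-close to `T_r(n, ℓ-1)`. -/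
theorem stability_expansion {α : Type*} [Fintype α] [DecidableEq α]
    (r ℓ : ℕ) (hr : 2 ≤ r) (hrl : r < ℓ)
    (F : SimpleGraph α) [DecidableRel F.Adj] (hχ : F.chromaticNumber = (ℓ : ℕ∞)) :
    ∀ ε : ℝ, 0 < ε → ∃ n₀ : ℕ, 0 < n₀ ∧ ∃ η : ℝ, 0 < η ∧
      ∀ n : ℕ, n₀ < n → ∀ G : Finset (Finset (Fin n)),
        IsRGraph r G → ¬ ContainsCopy (expansion r F) G →
        (turanNum r n (ℓ - 1) : ℝ) - η * (n.choose r) ≤ (G.card : ℝ) →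
        EpsClose r n ε G (turanGraph r n (ℓ - 1)) :=
  fun _ hε => stability_expansion_general hr hrl
    (SimpleGraph.chromaticNumber_le_iff_colorable.1 hχ.le) hε
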